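/- Cauchy's estimates with L¹ norm: assume m > 4. Let α, β ∈ ℕ^m be multi-indices. There exists a constant c_{α,β,m,k} > 0, depending only on α, β, m, k, with the following property: for every open set Ω ⊆ ℝ^m, every f ∈ C²(Ω×𝔹^m, ℋ_k) with 𝒟_k f = 0 in Ω × 𝔹^m, every a ∈ Ω and r₁ > 0 with the closed ball B̄(a,r₁) contained in Ω, and every ν₀ ∈ 𝔹^m with r₂ := 1 − |ν₀| (the distance from ν₀ to 𝕊^{m-1}), one has |D_ν^β D_x^α f(a,ν₀)| ≤ c_{α,β,m,k} · ‖f‖_{L¹(B(a,r₁)×B(0,1−r₂/4))} / (r₁^{m+|α|} r₂^{m+|β|}), where ‖f‖_{L¹(B(a,r₁)×B(0,1−r₂/4))} := ∫_{B(a,r₁)} ∫_{B(0,1−r₂/4)} |f(x,ν)| dν dx with Lebesgue measure in both variables. -/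

import Mathlib

noncomputable section

open MeasureTheory Metric Filter Topology
open scoped RealInnerProductSpace

/-- `ℝ^m` as a Euclidean space. -/
abbrev Evec (m : ℕ) : Type := EuclideanSpace ℝ (Fin m)

/-- Partial derivative in the `i`-th coordinate direction. -/
def pdv {m : ℕ} (i : Fin m) (f : Evec m → ℝ) (x : Evec m) : ℝ :=
  fderiv ℝ f x (EuclideanSpace.single i 1)

/-- Euclidean Laplacian on `ℝ^m`. -/
def lapl {m : ℕ} (f : Evec m → ℝ) (x : Evec m) : ℝ :=
  ∑ i : Fin m, pdv i (pdv i f) x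

/-- `p` is a real-valued polynomial function on `ℝ^m`, homogeneous of degree `k` and
harmonic; i.e. `p ∈ ℋ_k`. -/
def IsHk (m k : ℕ) (p : Evec m → ℝ) : Prop :=
  (∃ P : MvPolynomial (Fin m) ℝ, ∀ x : Evec m, p x = MvPolynomial.eval (fun i => x i) P) ∧
  (∀ (c : ℝ) (x : Evec m), p (c • x) = c ^ k * p x) ∧
  (∀ x : Evec m, lapl p x = 0)

/-- The surface measure `dS` on the unit sphere `𝕊^{m-1}`, as a measure on `ℝ^m`. -/
def sphereM (m : ℕ) : Measure (Evec m) :=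
  Measure.map Subtype.val ((volume : Measure (Evec m)).toSphere)

/-- `ω_m`, the surface area of the unit sphere `𝕊^{m-1}`. -/
def omegaS (m : ℕ) : ℝ := (sphereM m Set.univ).toReal

/-- The constant `c_{m,k} = 2(m+2k-2)/((m-2)ω_m)`. -/
def cmk (m k : ℕ) : ℝ := 2 * ((m : ℝ) + 2 * k - 2) / (((m : ℝ) - 2) * omegaS m)

/-- The reflection `R_a(u) = u - 2⟨a,u⟩a/|a|²` (in Clifford notation `a u a/|a|²`). -/
def reflv {m : ℕ} (a u : Evec m) : Evec m :=
  u - (2 * ⟪a, u⟫ / ‖a‖ ^ 2) • a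

/-- `dim ℋ_k`. -/
def hdim (m k : ℕ) : ℕ :=
  Nat.choose (m + k - 1) (m - 1) - Nat.choose (m + k - 3) (m - 1)

/-- `Z` is the reproducing kernel `Z_k` of `ℋ_k` on the unit sphere: a symmetric,
rotation invariant kernel, bounded by `dim ℋ_k` on the unit ball, belonging to `ℋ_k`
in the first variable and reproducing elements of `ℋ_k` from their spherical values. -/
def IsZk (m k : ℕ) (Z : Evec m → Evec m → ℝ) : Prop :=
  (∀ v : Evec m, IsHk m k (fun u => Z u v)) ∧
  (∀ p : Evec m → ℝ, IsHk m k p → ∀ v : Evec m, (∫ u, Z u v * p u ∂(sphereM m)) = p v) ∧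
  (∀ u v : Evec m, Z u v = Z v u) ∧
  (∀ u v : Evec m, ‖u‖ ≤ 1 → ‖v‖ ≤ 1 → |Z u v| ≤ (hdim m k : ℝ)) ∧
  (∀ (A : Evec m ≃ₗᵢ[ℝ] Evec m) (u v : Evec m), Z (A u) (A v) = Z u v)

/-- The point `(x', y) ∈ ℝ^{d+1}` with first `d` coordinates `x'` and last coordinate `y`. -/
def upP (d : ℕ) (x' : Evec d) (y : ℝ) : Evec (d + 1) :=
  (EuclideanSpace.equiv (Fin (d + 1)) ℝ).symm
    (Fin.snoc (⇑(EuclideanSpace.equiv (Fin d) ℝ) x') y)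

/-- The first `d` coordinates of a point of `ℝ^{d+1}`. -/
def downP (d : ℕ) (x : Evec (d + 1)) : Evec d :=
  (EuclideanSpace.equiv (Fin d) ℝ).symm (fun i => x (Fin.castSucc i))

/-- The last coordinate of a point of `ℝ^{d+1}`. -/
def lastP (d : ℕ) (x : Evec (d + 1)) : ℝ := x (Fin.last d)

/-- The Poisson kernel `P_H` for bosonic Laplacians in the upper half-space `ℝ^{d+1}_+`,
`P_H(x,t,u,v) = c_{m,k} (y/|x-t|^m) Z_k(R_{x-t}(u), v)` with `m = d+1`, `x = (x',y)`,
`t = (t',0)`. -/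
def PH (d k : ℕ) (Z : Evec (d + 1) → Evec (d + 1) → ℝ) (x' : Evec d) (y : ℝ)
    (t' : Evec d) (u v : Evec (d + 1)) : ℝ :=
  cmk (d + 1) k * (y / ‖upP d x' y - upP d t' 0‖ ^ (d + 1)) *
    Z (reflv (upP d x' y - upP d t' 0) u) v

/-- The Poisson integral `P_H[f]` in the upper half-space. -/
def PHint (d k : ℕ) (Z : Evec (d + 1) → Evec (d + 1) → ℝ)
    (f : Evec d → Evec (d + 1) → ℝ) (x' : Evec d) (y : ℝ) (v : Evec (d + 1)) : ℝ :=
  ∫ t' : Evec d, (∫ u, PH d k Z x' y t' u v * f t' u ∂(sphereM (d + 1)))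

/-- The Poisson kernel `P_B` for bosonic Laplacians in the unit ball. -/
def PB (m k : ℕ) (Z : Evec m → Evec m → ℝ) (x ζ ω ν : Evec m) : ℝ :=
  (cmk m k / 2) * ((1 - ‖x‖ ^ 2) / ‖x - ζ‖ ^ m) * Z (reflv (x - ζ) ω) ν

/-- The Poisson integral `P_B[h]` in the unit ball. -/
def PBint (m k : ℕ) (Z : Evec m → Evec m → ℝ) (h : Evec m → Evec m → ℝ)
    (x ν : Evec m) : ℝ :=
  ∫ ζ, (∫ ω, PB m k Z x ζ ω ν * h ζ ω ∂(sphereM m)) ∂(sphereM m)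

/-- Partial derivative in the first (`x`) variable. -/
def pd1 {m : ℕ} (i : Fin m) (f : Evec m → Evec m → ℝ) : Evec m → Evec m → ℝ :=
  fun x u => fderiv ℝ (fun x₁ => f x₁ u) x (EuclideanSpace.single i 1)

/-- Partial derivative in the second (`u`) variable. -/
def pd2 {m : ℕ} (i : Fin m) (f : Evec m → Evec m → ℝ) : Evec m → Evec m → ℝ :=
  fun x u => fderiv ℝ (fun u₁ => f x u₁) u (EuclideanSpace.single i 1)

/-- The bosonic Laplacian `𝒟_k`. -/
def Dk (m k : ℕ) (f : Evec m → Evec m → ℝ) : Evec m → Evec m → ℝ := fun x u =>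
  (∑ i : Fin m, pd1 i (pd1 i f) x u)
    - (4 / ((m : ℝ) + 2 * k - 2)) *
        ∑ i : Fin m, ∑ j : Fin m, u i * pd1 i (pd2 j (pd1 j f)) x u
    + (4 * ‖u‖ ^ 2 / (((m : ℝ) + 2 * k - 2) * ((m : ℝ) + 2 * k - 4))) *
        ∑ i : Fin m, ∑ j : Fin m, pd2 i (pd1 i (pd2 j (pd1 j f))) x u

/-- `f ∈ C²(Ω×𝔹^m, ℋ_k)`: twice continuously differentiable on `Ω × 𝔹^m` and, for each
fixed `x ∈ Ω`, coinciding in the second variable with an element of `ℋ_k`. -/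
def C2Hk (m k : ℕ) (Ω : Set (Evec m)) (f : Evec m → Evec m → ℝ) : Prop :=
  ContDiffOn ℝ 2 (fun q : Evec m × Evec m => f q.1 q.2) (Ω ×ˢ ball (0 : Evec m) 1) ∧
  ∀ x ∈ Ω, ∃ q, IsHk m k q ∧ ∀ u ∈ closedBall (0 : Evec m) 1, f x u = q u

/-- The `L^p` norm `(∫_{ℝ^{m-1}} ∫_{𝕊^{m-1}} |f(x',u)|^p dS(u) dx')^{1/p}` (`m = d+1`),
valued in `ℝ≥0∞`. -/
def lpH (d : ℕ) (p : ℝ) (f : Evec d → Evec (d + 1) → ℝ) : ENNReal :=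
  (∫⁻ x' : Evec d, ∫⁻ u, ENNReal.ofReal (|f x' u| ^ p) ∂(sphereM (d + 1))) ^ (1 / p)

/-- `f ∈ L^p(ℝ^{m-1}×𝔹^m, ℋ_k)` (`m = d+1`). -/
def MemLpH (d k : ℕ) (p : ℝ) (f : Evec d → Evec (d + 1) → ℝ) : Prop :=
  Measurable (fun q : Evec d × Evec (d + 1) => f q.1 q.2) ∧
  (∀ x' : Evec d, ∃ q, IsHk (d + 1) k q ∧
    ∀ u ∈ closedBall (0 : Evec (d + 1)) 1, f x' u = q u) ∧
  lpH d p f < ⊤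

/-- The `L^p` norm `(∫_{𝕊^{m-1}} ∫_{𝕊^{m-1}} |h(ζ,ω)|^p dS(ω) dS(ζ))^{1/p}`,
valued in `ℝ≥0∞`. -/
def lpS (m : ℕ) (p : ℝ) (h : Evec m → Evec m → ℝ) : ENNReal :=
  (∫⁻ ζ, ∫⁻ ω, ENNReal.ofReal (|h ζ ω| ^ p) ∂(sphereM m) ∂(sphereM m)) ^ (1 / p)

/-- `h ∈ L^p(𝕊^{m-1}×𝔹^m, ℋ_k)`. -/
def MemLpS (m k : ℕ) (p : ℝ) (h : Evec m → Evec m → ℝ) : Prop :=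
  Measurable (fun q : Evec m × Evec m => h q.1 q.2) ∧
  (∀ ζ : Evec m, ‖ζ‖ = 1 → ∃ q, IsHk m k q ∧
    ∀ ω ∈ closedBall (0 : Evec m) 1, h ζ ω = q ω) ∧
  lpS m p h < ⊤

/-- Iterated partial derivative `D_x^α` in the first variable, for a multi-index `α ∈ ℕ^m`. -/
def Dx {m : ℕ} (α : Fin m → ℕ) (f : Evec m → Evec m → ℝ) : Evec m → Evec m → ℝ :=
  (List.finRange m).foldr (fun i g => (pd1 i)^[α i] g) f

/-- Iterated partial derivative `D_ν^β` in the second variable, for a multi-index `β ∈ ℕ^m`. -/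
def Dv {m : ℕ} (β : Fin m → ℕ) (f : Evec m → Evec m → ℝ) : Evec m → Evec m → ℝ :=
  (List.finRange m).foldr (fun i g => (pd2 i)^[β i] g) f

/-!
Writing `f(x, u) = ∑ s, c_s(x) q_s(u)` with `q_s` a basis of the homogeneous polynomials of degree
`k`, the estimate reduces to one for the scalar coefficients `c_s`. Since `⟨∂_u, ∂_x⟩`, `⟨u, ∂_x⟩`,
`|u|²` and `Δ_x` generate a small commutation algebra and `⟨∂_u, ∂_x⟩^(k+1)` kills polynomials of
degree `k`, the equation `𝒟_k f = 0` forces `Δ^(k+1) c_s = 0` in the sense of distributions.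

There is a smooth radial `φ` on the unit ball with integral one such that `(m + y·∇) φ = Δ^(k+1) ψ`
for a smooth `ψ` supported in that ball. The derivative in `R` of the average of `c_s` against the
dilation `φ_R` is then a pairing of `c_s` with `Δ^(k+1)` of a test function, so that
`c_s = c_s ⋆ φ_R`. The `x`-derivatives therefore fall on `φ_R`, each costing a factor `R⁻¹`, and
what remains is the `L¹` norm of `c_s`. Because the span of the `q_s` is finite-dimensional, the
latter is controlled by the `L¹` norm of `f`.
-/

open scoped ContDiff

section BosonicOperators

open MvPolynomial

variable {K : Type*} [Field K]

-- Applying `Y` to the equation `hD` of level `k + 1` gives a multiple of the equation of level `k`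
-- for `Y q`.
theorem pow_apply_eq_zero_of_bosonic {M : Type*} [AddCommGroup M] [Module K M]
    {X Y s N : Module.End K M} {μ : K} (hμ : ∀ j : ℕ, μ + 2 * j ≠ 4)
    (hYX : Y * X = X * Y + s) (hYN : Y * N = N * Y + (2 : K) • X)
    (hX : Commute s X) (hY : Commute s Y) (hN : Commute s N) (k : ℕ) {q : M}
    (hq : (Y ^ (k + 1)) q = 0)
    (hD : s q - (4 / (μ + 2 * k - 2)) • X (Y q)
      + (4 / ((μ + 2 * k - 2) * (μ + 2 * k - 4))) • N (Y (Y q)) = 0) :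
    (s ^ (k + 1)) q = 0 := by
  induction k generalizing q with
  | zero =>
    have hYq : Y q = 0 := by simpa using hq
    simpa [hYq] using hD
  | succ k ih =>
    have h0 : μ + 2 * k ≠ 0 := fun h => hμ (k + 2) (by push_cast; linear_combination h)
    have h2 : μ + 2 * k - 2 ≠ 0 := fun h => hμ (k + 1) (by push_cast; linear_combination h)
    have h4 : μ + 2 * k - 4 ≠ 0 := fun h => hμ k (by linear_combination h)
    rw [show μ + 2 * ((k + 1 : ℕ) : K) - 2 = μ + 2 * k by push_cast; ring,
      show μ + 2 * ((k + 1 : ℕ) : K) - 4 = μ + 2 * k - 2 by push_cast; ring] at hD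
    have hYq : (s ^ (k + 1)) (Y q) = 0 := by
      refine ih (by rwa [pow_succ, Module.End.mul_apply] at hq) ?_
      have hYXq (z : M) : Y (X z) = X (Y z) + s z := LinearMap.congr_fun hYX z
      have hYNq (z : M) : Y (N z) = N (Y z) + (2 : K) • X z := LinearMap.congr_fun hYN z
      have hYs (z : M) : Y (s z) = s (Y z) := (LinearMap.congr_fun hY.eq z).symm
      have hYD := congrArg (((μ + 2 * k) / (μ + 2 * k - 4)) • Y ·) hD
      simp only [map_add, map_sub, map_smul, map_zero, hYXq, hYNq, hYs, smul_zero] at hYD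
      rw [← hYD]
      match_scalars <;> field_simp
      ring
    have hpow {Z : Module.End K M} (hZ : Commute s Z) (z : M) :
        (s ^ (k + 1)) (Z z) = Z ((s ^ (k + 1)) z) :=
      LinearMap.congr_fun (hZ.pow_left (k + 1)).eq z
    have hsq : s q = (4 / (μ + 2 * k)) • X (Y q)
        - (4 / ((μ + 2 * k) * (μ + 2 * k - 2))) • N (Y (Y q)) := by
      rw [← sub_eq_zero, ← hD]
      abel
    rw [pow_succ, Module.End.mul_apply, hsq, map_sub, map_smul, map_smul, hpow hX, hYq,
      hpow hN, hpow hY, hYq]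
    simp only [map_zero, smul_zero, sub_zero]

variable {σ : Type*} [Fintype σ]

/-- The polynomial-valued second-order expression defining the bosonic Laplacian: the
coordinates `u_i` are the variables, and `H i j` stands for the value of `∂_{x_i} ∂_{x_j} f`.
The dimension enters only through the coefficients, as the parameter `μ`. -/
def bosonicSymbol (μ : K) (k : ℕ) :
    (σ → σ → MvPolynomial σ K) →ₗ[K] MvPolynomial σ K where
  toFun H := ∑ i, H i i - (4 / (μ + 2 * k - 2)) • ∑ i, ∑ j, X i * pderiv j (H i j)
    + (4 / ((μ + 2 * k - 2) * (μ + 2 * k - 4))) •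
      ((∑ i, X i ^ 2) * ∑ i, ∑ j, pderiv i (pderiv j (H i j)))
  map_add' H H' := by
    simp only [Pi.add_apply, map_add, mul_add, Finset.sum_add_distrib]
    module
  map_smul' c H := by
    simp only [Pi.smul_apply, Derivation.map_smul, mul_smul_comm, ← Finset.smul_sum,
      RingHom.id_apply]
    module

theorem bosonicSymbol_apply (μ : K) (k : ℕ) (H : σ → σ → MvPolynomial σ K) :
    bosonicSymbol μ k H =
      ∑ i, H i i - (4 / (μ + 2 * k - 2)) • ∑ i, ∑ j, X i * pderiv j (H i j)
        + (4 / ((μ + 2 * k - 2) * (μ + 2 * k - 4))) •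
          ((∑ i, X i ^ 2) * ∑ i, ∑ j, pderiv i (pderiv j (H i j))) := rfl

variable {V : Type*} [AddCommGroup V] [Module K V]

/-- The operator `F ↦ ∑ i, A i ∘ F ∘ d i` on linear maps. -/
def contractOp {P : Type*} [AddCommGroup P] [Module K P] (A : σ → Module.End K P)
    (d : σ → Module.End K V) : Module.End K (V →ₗ[K] P) :=
  ∑ i, LinearMap.compRight K (A i) ∘ₗ LinearMap.lcomp K P (d i)

/-- The operator `⟨u, ∂_x⟩` on polynomial-valued functionals, where `d i` plays the role of
`∂_{x_i}`. -/
def polarizationOp (d : σ → Module.End K V) : Module.End K (V →ₗ[K] MvPolynomial σ K) :=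
  contractOp (fun i => LinearMap.mulLeft K (X i)) d

/-- The operator `⟨∂_u, ∂_x⟩` on polynomial-valued functionals, where `d i` plays the role of
`∂_{x_i}`. -/
def divergenceOp (d : σ → Module.End K V) : Module.End K (V →ₗ[K] MvPolynomial σ K) :=
  contractOp (fun i => (pderiv i).toLinearMap) d

/-- The operator `Δ_x` on linear functionals, where `d i` plays the role of `∂_{x_i}`. -/
def laplaceOp {P : Type*} [AddCommGroup P] [Module K P] (d : σ → Module.End K V) :
    Module.End K (V →ₗ[K] P) :=
  LinearMap.lcomp K _ (∑ i, d i * d i)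

/-- Multiplication by `|u|²` on polynomial-valued functionals. -/
def normSqOp : Module.End K (V →ₗ[K] MvPolynomial σ K) :=
  LinearMap.compRight K (LinearMap.mulLeft K (∑ i, X i ^ 2))

theorem polarizationOp_apply (d : σ → Module.End K V) (F : V →ₗ[K] MvPolynomial σ K) (ψ : V) :
    polarizationOp d F ψ = ∑ i, X i * F (d i ψ) := by
  simp [polarizationOp, contractOp, LinearMap.sum_apply]

theorem divergenceOp_apply (d : σ → Module.End K V) (F : V →ₗ[K] MvPolynomial σ K) (ψ : V) :
    divergenceOp d F ψ = ∑ i, pderiv i (F (d i ψ)) := by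
  simp [divergenceOp, contractOp, LinearMap.sum_apply]

theorem laplaceOp_apply (d : σ → Module.End K V) (F : V →ₗ[K] MvPolynomial σ K) (ψ : V) :
    laplaceOp d F ψ = ∑ i, F (d i (d i ψ)) := by
  simp [laplaceOp, LinearMap.sum_apply]

theorem normSqOp_apply (F : V →ₗ[K] MvPolynomial σ K) (ψ : V) :
    normSqOp F ψ = (∑ i, X i ^ 2) * F ψ := rfl

theorem laplaceOp_pow_apply (d : σ → Module.End K V) (n : ℕ) (F : V →ₗ[K] MvPolynomial σ K)
    (ψ : V) : (laplaceOp d ^ n) F ψ = F (((∑ i, d i * d i) ^ n) ψ) := by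
  induction n generalizing F with
  | zero => rfl
  | succ n ih => rw [pow_succ, Module.End.mul_apply, ih, pow_succ']; rfl

theorem divergenceOp_mul_polarizationOp {d : σ → Module.End K V}
    (hd : ∀ i j, Commute (d i) (d j)) :
    divergenceOp d * polarizationOp d = polarizationOp d * divergenceOp d + laplaceOp d := by
  classical
  ext1 F
  ext1 ψ
  simp only [Module.End.mul_apply, LinearMap.add_apply, divergenceOp_apply, polarizationOp_apply,
    laplaceOp_apply, map_sum, Derivation.leibniz, pderiv_X, smul_eq_mul, Finset.mul_sum,
    Finset.sum_add_distrib]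
  rw [Finset.sum_comm]
  congr 1
  · exact Finset.sum_congr rfl fun i _ => Finset.sum_congr rfl fun j _ => by
      rw [← Module.End.mul_apply, (hd i j).eq, Module.End.mul_apply]
  · simp [Pi.single_apply]

theorem divergenceOp_mul_normSqOp (d : σ → Module.End K V) :
    divergenceOp d * normSqOp = normSqOp * divergenceOp d + (2 : K) • polarizationOp d := by
  classical
  ext1 F
  ext1 ψ
  have hnorm (i : σ) : pderiv i (∑ j, X j ^ 2 : MvPolynomial σ K) = 2 * X i := by
    simp [Derivation.leibniz_pow, pderiv_X, Pi.single_apply]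
  simp only [Module.End.mul_apply, LinearMap.add_apply, LinearMap.smul_apply, divergenceOp_apply,
    polarizationOp_apply, normSqOp_apply, Derivation.leibniz, hnorm, smul_eq_mul,
    Finset.sum_add_distrib, Finset.mul_sum, Finset.smul_sum]
  congr 1
  exact Finset.sum_congr rfl fun i _ => by rw [two_smul]; ring

theorem commute_laplaceOp_contractOp {P : Type*} [AddCommGroup P] [Module K P]
    (A : σ → Module.End K P) {d : σ → Module.End K V} (hd : ∀ i j, Commute (d i) (d j)) :
    Commute (laplaceOp d) (contractOp A d) := by
  have hΔ (i : σ) : Commute (∑ j, d j * d j) (d i) :=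
    Commute.sum_left _ _ _ fun j _ => (hd j i).mul_left (hd j i)
  ext1 F
  ext1 ψ
  simp only [Module.End.mul_apply, laplaceOp, contractOp, LinearMap.lcomp_apply,
    LinearMap.sum_apply, LinearMap.comp_apply, LinearMap.compRight_apply]
  refine Finset.sum_congr rfl fun i _ => ?_
  simpa only [Module.End.mul_apply, LinearMap.sum_apply]
    using congrArg (fun z => A i (F z)) (LinearMap.congr_fun (hΔ i).eq.symm ψ)

theorem divergenceOp_pow_eq_zero (d : σ → Module.End K V) {k : ℕ}
    {F : V →ₗ[K] MvPolynomial σ K} (hF : ∀ ψ, (F ψ).IsHomogeneous k) :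
    (divergenceOp d ^ (k + 1)) F = 0 := by
  induction k generalizing F with
  | zero =>
    ext1 ψ
    rw [zero_add, pow_one, divergenceOp_apply]
    refine Finset.sum_eq_zero fun i _ => ?_
    have hconst := (totalDegree_zero_iff_isHomogeneous _).2 (hF (d i ψ))
    rw [totalDegree_eq_zero_iff_eq_C] at hconst
    rw [hconst, pderiv_C]
  | succ k ih =>
    rw [pow_succ, Module.End.mul_apply]
    refine ih fun ψ => ?_
    rw [divergenceOp_apply]
    exact IsHomogeneous.sum _ _ _ fun i _ => (hF _).pderiv

theorem apply_laplace_pow_eq_zero_of_bosonicSymbol {d : σ → Module.End K V}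
    (hd : ∀ i j, Commute (d i) (d j)) {μ : K} (hμ : ∀ j : ℕ, μ + 2 * j ≠ 4) {k : ℕ}
    {F : V →ₗ[K] MvPolynomial σ K} (hF : ∀ ψ, (F ψ).IsHomogeneous k)
    (hD : ∀ ψ, bosonicSymbol μ k (fun i j => F (d j (d i ψ))) = 0) (ψ : V) :
    F (((∑ i, d i * d i) ^ (k + 1)) ψ) = 0 := by
  have hpow : (laplaceOp d ^ (k + 1)) F = 0 := by
    refine pow_apply_eq_zero_of_bosonic hμ (divergenceOp_mul_polarizationOp hd)
      (divergenceOp_mul_normSqOp d) (commute_laplaceOp_contractOp _ hd)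
      (commute_laplaceOp_contractOp _ hd) rfl k (divergenceOp_pow_eq_zero d hF)
      (LinearMap.ext fun ψ => ?_)
    simpa only [LinearMap.add_apply, LinearMap.sub_apply, LinearMap.smul_apply,
      LinearMap.zero_apply, laplaceOp_apply, polarizationOp_apply, divergenceOp_apply,
      normSqOp_apply, map_sum, Finset.mul_sum, bosonicSymbol_apply] using hD ψ
  rw [← laplaceOp_pow_apply, hpow, LinearMap.zero_apply]

end BosonicOperators

section WeaklyPolyharmonic

variable {m : ℕ}

theorem contDiff_pdv {n N : WithTop ℕ∞} (i : Fin m) {g : Evec m → ℝ} (hg : ContDiff ℝ N g)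
    (hn : n + 1 ≤ N) : ContDiff ℝ n (pdv i g) :=
  (hg.fderiv_right hn).clm_apply contDiff_const

theorem pdv_pdv_apply {g : Evec m → ℝ} (hg : ContDiff ℝ 2 g) (i j : Fin m) (y : Evec m) :
    pdv i (pdv j g) y = fderiv ℝ (fderiv ℝ g) y (EuclideanSpace.single i 1)
      (EuclideanSpace.single j 1) := by
  have hd : DifferentiableAt ℝ (fderiv ℝ g) y :=
    (hg.fderiv_right (m := 1) (by norm_num)).differentiable one_ne_zero y
  rw [pdv, show pdv j g = fun y => fderiv ℝ g y (EuclideanSpace.single j 1) from rfl,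
    fderiv_clm_apply hd (differentiableAt_const _)]
  simp

theorem pdv_pdv_comm {g : Evec m → ℝ} (hg : ContDiff ℝ 2 g) (i j : Fin m) :
    pdv i (pdv j g) = pdv j (pdv i g) := by
  funext y
  rw [pdv_pdv_apply hg, pdv_pdv_apply hg]
  exact hg.contDiffAt.isSymmSndFDerivAt (by simp) _ _

theorem integrable_mul_of_hasCompactSupport {c ψ : Evec m → ℝ} (hc : Continuous c)
    (hψ : Continuous ψ) (hψs : HasCompactSupport ψ) : Integrable fun y => c y * ψ y :=
  (hc.mul hψ).integrable_of_hasCompactSupport hψs.mul_left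

theorem integral_mul_pdv {c ψ : Evec m → ℝ} (hc : ContDiff ℝ 1 c) (hψ : ContDiff ℝ 1 ψ)
    (hψs : HasCompactSupport ψ) (i : Fin m) :
    ∫ y, c y * pdv i ψ y = -∫ y, pdv i c y * ψ y :=
  integral_mul_fderiv_eq_neg_fderiv_mul_of_integrable
    (integrable_mul_of_hasCompactSupport (contDiff_pdv (n := 0) i hc (by simp)).continuous
      hψ.continuous hψs)
    (integrable_mul_of_hasCompactSupport hc.continuous
      (contDiff_pdv (n := 0) i hψ (by simp)).continuous (hψs.fderiv_apply ℝ _))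
    (integrable_mul_of_hasCompactSupport hc.continuous hψ.continuous hψs)
    (fun y _ => hc.differentiable one_ne_zero y) (fun y _ => hψ.differentiable one_ne_zero y)

/-- The space of test functions on `W`: smooth functions with compact support contained in `W`. -/
def testSpace (W : Set (Evec m)) : Submodule ℝ (Evec m → ℝ) where
  carrier := {ψ | ContDiff ℝ ∞ ψ ∧ HasCompactSupport ψ ∧ tsupport ψ ⊆ W}
  add_mem' := fun hf hg => ⟨hf.1.add hg.1, hf.2.1.add hg.2.1,
    (tsupport_add _ _).trans (Set.union_subset hf.2.2 hg.2.2)⟩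
  zero_mem' := ⟨contDiff_const, HasCompactSupport.zero, by simp [tsupport]⟩
  smul_mem' := fun c f hf => ⟨contDiff_const.smul hf.1, hf.2.1.smul_left (f := fun _ => c),
    (tsupport_smul_subset_right (fun _ => c) f).trans hf.2.2⟩

theorem pdv_mem_testSpace {W : Set (Evec m)} {ψ : Evec m → ℝ} (hψ : ψ ∈ testSpace W) (i : Fin m) :
    pdv i ψ ∈ testSpace W :=
  ⟨contDiff_pdv i hψ.1 le_rfl, hψ.2.1.fderiv_apply ℝ _,
    (tsupport_fderiv_apply_subset ℝ _).trans hψ.2.2⟩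

/-- The partial derivative `∂_i`, as an operator on test functions. -/
def testDeriv (W : Set (Evec m)) (i : Fin m) : Module.End ℝ (testSpace W) where
  toFun ψ := ⟨pdv i ψ, pdv_mem_testSpace ψ.2 i⟩
  map_add' f g := by
    ext y
    change fderiv ℝ (f.1 + g.1) y _ = _
    rw [fderiv_add (f.2.1.differentiable (by simp) y) (g.2.1.differentiable (by simp) y)]
    rfl
  map_smul' c f := by
    ext y
    change fderiv ℝ (c • f.1) y _ = _
    rw [fderiv_const_smul_field]
    rfl

theorem commute_testDeriv (W : Set (Evec m)) (i j : Fin m) :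
    Commute (testDeriv W i) (testDeriv W j) :=
  LinearMap.ext fun ψ => Subtype.ext <|
    pdv_pdv_comm (ψ.2.1.of_le (WithTop.coe_le_coe.2 le_top)) i j

theorem coe_sum_testDeriv_pow_apply {W : Set (Evec m)} (n : ℕ) (ψ : testSpace W) :
    (((∑ i, testDeriv W i * testDeriv W i) ^ n) ψ : Evec m → ℝ) = lapl^[n] ψ := by
  induction n with
  | zero => rfl
  | succ n ih =>
    rw [Function.iterate_succ_apply', ← ih, pow_succ', Module.End.mul_apply,
      LinearMap.sum_apply]
    funext y
    simp only [lapl, AddSubmonoidClass.coe_finsetSum, Finset.sum_apply]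
    rfl

theorem integrable_mul_testSpace {c : Evec m → ℝ} (hc : Continuous c) {W : Set (Evec m)}
    (ψ : testSpace W) : Integrable fun y => c y * (ψ : Evec m → ℝ) y :=
  integrable_mul_of_hasCompactSupport hc ψ.2.1.continuous ψ.2.2.1

/-- Integration against `c`, as a functional on test functions. -/
def testPairing {c : Evec m → ℝ} (hc : Continuous c) (W : Set (Evec m)) :
    testSpace W →ₗ[ℝ] ℝ where
  toFun ψ := ∫ y, c y * (ψ : Evec m → ℝ) y
  map_add' f g := by
    simp only [Submodule.coe_add, Pi.add_apply, mul_add]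
    exact integral_add (integrable_mul_testSpace hc f) (integrable_mul_testSpace hc g)
  map_smul' a f := by
    simp only [Submodule.coe_smul, Pi.smul_apply, smul_eq_mul, mul_left_comm _ a,
      integral_const_mul, RingHom.id_apply]

theorem testPairing_testDeriv_testDeriv {c : Evec m → ℝ} (hc : ContDiff ℝ 2 c)
    {W : Set (Evec m)} (i j : Fin m) (ψ : testSpace W) :
    testPairing hc.continuous W (testDeriv W j (testDeriv W i ψ))
      = ∫ y, pdv i (pdv j c) y * (ψ : Evec m → ℝ) y := by
  have hψ : ContDiff ℝ 1 (ψ : Evec m → ℝ) := ψ.2.1.of_le (WithTop.coe_le_coe.2 le_top)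
  have hiψ : ContDiff ℝ 1 (pdv i (ψ : Evec m → ℝ)) :=
    contDiff_pdv i ψ.2.1 (WithTop.coe_le_coe.2 le_top)
  calc ∫ y, c y * pdv j (pdv i (ψ : Evec m → ℝ)) y
      = -∫ y, pdv j c y * pdv i (ψ : Evec m → ℝ) y :=
        integral_mul_pdv (hc.of_le (by norm_num)) hiψ (ψ.2.2.1.fderiv_apply ℝ _) j
    _ = ∫ y, pdv i (pdv j c) y * (ψ : Evec m → ℝ) y := by
        rw [integral_mul_pdv (contDiff_pdv j hc (by norm_num)) hψ ψ.2.2.1, neg_neg]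

/-- `c` solves `Δⁿ c = 0` on `W` in the sense of distributions. -/
def IsWeaklyPolyharmonicOn (n : ℕ) (c : Evec m → ℝ) (W : Set (Evec m)) : Prop :=
  ∀ η ∈ testSpace W, ∫ y, c y * lapl^[n] η y = 0

theorem linearMap_integral_eq_zero {X κ P : Type*} [MeasurableSpace X] {μ : Measure X} [Finite κ]
    [AddCommGroup P] [Module ℝ P] (L : (κ → ℝ) →ₗ[ℝ] P) {g : κ → X → ℝ}
    (hg : ∀ s, Integrable (g s) μ) (h : ∀ x, L (fun s => g s x) = 0) :
    L (fun s => ∫ x, g s x ∂μ) = 0 := by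
  have := Fintype.ofFinite κ
  rw [← Module.forall_dual_apply_eq_zero_iff ℝ]
  intro l
  calc l (L fun s => ∫ x, g s x ∂μ) = (l ∘ₗ L).toContinuousLinearMap (∫ x, (fun s => g s x) ∂μ) :=
        congrArg (fun v => l (L v)) (funext fun s => (eval_integral hg s).symm)
    _ = ∫ x, l (L fun s => g s x) ∂μ :=
        ((l ∘ₗ L).toContinuousLinearMap.integral_comp_comm (Integrable.of_eval hg)).symm
    _ = 0 := by simp only [h, map_zero, integral_zero]

variable {ι : Type*} [Fintype ι]

theorem bosonicSymbol_integral_eq_zero {X : Type*} [MeasurableSpace X] {ρ : Measure X} {μ : ℝ}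
    {k : ℕ} {q : ι → MvPolynomial (Fin m) ℝ} {g : ι → Fin m → Fin m → X → ℝ}
    (hg : ∀ s i j, Integrable (g s i j) ρ)
    (h : ∀ x, bosonicSymbol μ k (fun i j => ∑ s, g s i j x • q s) = 0) :
    bosonicSymbol μ k (fun i j => ∑ s, (∫ x, g s i j x ∂ρ) • q s) = 0 := by
  let Λ : (ι × Fin m × Fin m → ℝ) →ₗ[ℝ] MvPolynomial (Fin m) ℝ :=
    bosonicSymbol μ k ∘ₗ LinearMap.pi fun i => LinearMap.pi fun j =>
      ∑ s, (LinearMap.proj (s, i, j)).smulRight (q s)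
  have hΛ (w : ι × Fin m × Fin m → ℝ) :
      Λ w = bosonicSymbol μ k fun i j => ∑ s, w (s, i, j) • q s := by
    refine congrArg (bosonicSymbol μ k) (funext₂ fun i j => ?_)
    simp only [LinearMap.pi_apply, LinearMap.sum_apply, LinearMap.smulRight_apply,
      LinearMap.proj_apply]
  have hint := linearMap_integral_eq_zero Λ (fun p => hg p.1 p.2.1 p.2.2) fun x =>
    (hΛ fun p => g p.1 p.2.1 p.2.2 x).trans (h x)
  rwa [hΛ] at hint

theorem isWeaklyPolyharmonicOn_of_bosonicSymbol {μ : ℝ} (hμ : ∀ j : ℕ, μ + 2 * j ≠ 4) {k : ℕ}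
    {q : ι → MvPolynomial (Fin m) ℝ} (hq : ∀ s, (q s).IsHomogeneous k)
    (hqi : LinearIndependent ℝ q) {c : ι → Evec m → ℝ} (hc : ∀ s, ContDiff ℝ 2 (c s))
    {W : Set (Evec m)}
    (hD : ∀ x ∈ W, bosonicSymbol μ k (fun i j => ∑ s, pdv i (pdv j (c s)) x • q s) = 0) (s : ι) :
    IsWeaklyPolyharmonicOn (k + 1) (c s) W := by
  intro η hη
  let F : testSpace W →ₗ[ℝ] MvPolynomial (Fin m) ℝ :=
    ∑ s, (testPairing (hc s).continuous W).smulRight (q s)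
  have hF (ψ : testSpace W) : F ψ = ∑ s, testPairing (hc s).continuous W ψ • q s := by
    simp only [F, LinearMap.sum_apply, LinearMap.smulRight_apply]
  have hFhom (ψ : testSpace W) : (F ψ).IsHomogeneous k := by
    rw [hF]
    exact MvPolynomial.IsHomogeneous.sum _ _ _ fun s _ =>
      (MvPolynomial.homogeneousSubmodule (Fin m) ℝ k).smul_mem _ (hq s)
  have hFD (ψ : testSpace W) :
      bosonicSymbol μ k (fun i j => F (testDeriv W j (testDeriv W i ψ))) = 0 := by
    simp only [hF, fun i j s => testPairing_testDeriv_testDeriv (hc s) i j ψ]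
    refine bosonicSymbol_integral_eq_zero (fun s i j => integrable_mul_testSpace
      (contDiff_pdv (n := 0) i (contDiff_pdv (n := 1) j (hc s) (by norm_num))
        (by norm_num)).continuous ψ) fun y => ?_
    by_cases hy : y ∈ W
    · simp only [mul_comm _ ((ψ : Evec m → ℝ) y), mul_smul, ← Finset.smul_sum]
      exact (map_smul (bosonicSymbol μ k) _ _).trans (by rw [hD y hy, smul_zero])
    · simp only [image_eq_zero_of_notMem_tsupport fun h => hy (ψ.2.2.2 h), mul_zero, zero_smul,
        Finset.sum_const_zero]
      exact map_zero _
  have hFη := apply_laplace_pow_eq_zero_of_bosonicSymbol (commute_testDeriv W) hμ hFhom hFD ⟨η, hη⟩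
  rw [hF] at hFη
  have hs := Fintype.linearIndependent_iff.1 hqi _ hFη s
  rwa [testPairing, LinearMap.coe_mk, AddHom.coe_mk, coe_sum_testDeriv_pow_apply] at hs

end WeaklyPolyharmonic

section MultiIterate

variable {m : ℕ} {T U : Type*}

/-- The composite of the iterates `(P i)^[α i]`, in the order used by `Dx` and `Dv`. -/
def multiIterate (P : Fin m → T → T) (α : Fin m → ℕ) (g : T) : T :=
  (List.finRange m).foldr (fun i g => (P i)^[α i] g) g

theorem multiIterate_rel_graded {P : Fin m → T → T} {Q : Fin m → U → U} {r : ℕ → T → U → Prop}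
    (h : ∀ n i x y, r n x y → r (n + 1) (P i x) (Q i y)) (α : Fin m → ℕ) {n : ℕ} {x : T} {y : U}
    (hxy : r n x y) : r (n + ∑ i, α i) (multiIterate P α x) (multiIterate Q α y) := by
  have iterate_rel (i : Fin m) (l n : ℕ) (x : T) (y : U) (hxy : r n x y) :
      r (n + l) ((P i)^[l] x) ((Q i)^[l] y) := by
    induction l with
    | zero => exact hxy
    | succ l ih =>
      rw [Function.iterate_succ_apply', Function.iterate_succ_apply', ← add_assoc]
      exact h _ i _ _ ih
  rw [Fin.sum_univ_def, multiIterate, multiIterate]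
  induction List.finRange m with
  | nil => exact hxy
  | cons i L ih =>
    rw [List.map_cons, List.sum_cons, add_comm (α i), ← add_assoc]
    exact iterate_rel i (α i) _ _ _ ih

theorem multiIterate_rel {P : Fin m → T → T} {Q : Fin m → U → U} {r : T → U → Prop}
    (h : ∀ i x y, r x y → r (P i x) (Q i y)) (α : Fin m → ℕ) {x : T} {y : U} (hxy : r x y) :
    r (multiIterate P α x) (multiIterate Q α y) :=
  multiIterate_rel_graded (r := fun _ => r) (n := 0) (fun _ => h) α hxy

theorem multiIterate_induction {P : Fin m → T → T} {p : T → Prop} (h : ∀ i x, p x → p (P i x))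
    (α : Fin m → ℕ) {x : T} (hx : p x) : p (multiIterate P α x) :=
  multiIterate_rel (Q := P) (r := fun x _ => p x) (fun i x _ => h i x) α (y := x) hx

theorem multiIterate_pi_apply {ι : Type*} (P : Fin m → T → T) (α : Fin m → ℕ) (x : ι → T) (s : ι) :
    multiIterate (fun i (x : ι → T) s => P i (x s)) α x s = multiIterate P α (x s) :=
  multiIterate_rel (r := fun (x : ι → T) y => x s = y) (fun i _ _ h => congrArg (P i) h) α rfl

end MultiIterate

section SeparatedSum

open MvPolynomial (eval pderiv)

variable {m : ℕ}

theorem contDiff_eval (p : MvPolynomial (Fin m) ℝ) {n : WithTop ℕ∞} :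
    ContDiff ℝ n fun u : Evec m => eval u.ofLp p := by
  induction p using MvPolynomial.induction_on with
  | C a => simpa only [MvPolynomial.eval_C] using contDiff_const
  | add p q hp hq => simpa only [map_add] using hp.add hq
  | mul_X p i hp =>
    simp only [map_mul, MvPolynomial.eval_X]
    exact hp.mul (contDiff_piLp_apply 2)

theorem differentiable_eval (p : MvPolynomial (Fin m) ℝ) :
    Differentiable ℝ fun u : Evec m => eval u.ofLp p :=
  (contDiff_eval p (n := 1)).differentiable one_ne_zero

theorem pdv_eval (j : Fin m) (p : MvPolynomial (Fin m) ℝ) (u : Evec m) :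
    pdv j (fun u : Evec m => eval u.ofLp p) u = eval u.ofLp (pderiv j p) := by
  induction p using MvPolynomial.induction_on with
  | C a => simp [pdv]
  | add p q hp hq =>
    simp only [pdv, map_add] at *
    rw [fderiv_fun_add (differentiable_eval p u) (differentiable_eval q u), add_apply, hp, hq]
  | mul_X p i hp =>
    have hX : HasFDerivAt (fun u : Evec m => u i) (EuclideanSpace.proj i : Evec m →L[ℝ] ℝ) u :=
      (EuclideanSpace.proj i : Evec m →L[ℝ] ℝ).hasFDerivAt
    simp only [pdv, map_mul, MvPolynomial.eval_X] at *
    rw [fderiv_fun_mul (differentiable_eval p u) hX.differentiableAt, hX.fderiv, add_apply,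
      smul_apply, smul_apply, hp, Derivation.leibniz, MvPolynomial.pderiv_X]
    obtain rfl | hij := eq_or_ne i j
    · simp
    · simp [hij]

theorem mvPolynomial_eq_zero_of_eval_ball {p : MvPolynomial (Fin m) ℝ} {r : ℝ} (hr : 0 < r)
    (h : ∀ u ∈ ball (0 : Evec m) r, eval u.ofLp p = 0) : p = 0 := by
  obtain ⟨ε, hε, hsub⟩ := Metric.isOpen_iff.1
    (isOpen_ball.preimage (PiLp.continuous_toLp 2 fun _ : Fin m => ℝ)) 0
    (mem_ball_self hr : (0 : Evec m) ∈ ball 0 r)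
  refine MvPolynomial.funext_set (fun _ => Set.Ioo 0 ε) (fun _ => Set.Ioo_infinite hε)
    fun x hx => ?_
  rw [map_zero]
  refine h (WithLp.toLp 2 x) (hsub ?_)
  rw [mem_ball_zero_iff, pi_norm_lt_iff hε]
  intro i
  have hxi := hx i (Set.mem_univ i)
  rw [Real.norm_of_nonneg hxi.1.le]
  exact hxi.2

variable {ι : Type*} [Fintype ι] {W : Set (Evec m)} {g : Evec m → Evec m → ℝ}
  {c : ι → Evec m → ℝ} {q : ι → MvPolynomial (Fin m) ℝ}

/-- `g(x, u) = ∑ s, c_s(x) q_s(u)` for `x` in `W` and `u` in the unit ball. -/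
def IsSeparatedSum (W : Set (Evec m)) (g : Evec m → Evec m → ℝ) (c : ι → Evec m → ℝ)
    (q : ι → MvPolynomial (Fin m) ℝ) : Prop :=
  ∀ x ∈ W, ∀ u ∈ ball (0 : Evec m) 1, g x u = ∑ s, c s x * eval u.ofLp (q s)

namespace IsSeparatedSum

theorem pd1 (h : IsSeparatedSum W g c q) (hW : IsOpen W) (hc : ∀ s, Differentiable ℝ (c s))
    (i : Fin m) : IsSeparatedSum W (pd1 i g) (fun s => pdv i (c s)) q := by
  intro x hx u hu
  have heq : (fun x₁ => g x₁ u) =ᶠ[𝓝 x] fun x₁ => ∑ s, c s x₁ * eval u.ofLp (q s) := by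
    filter_upwards [hW.mem_nhds hx] with y hy using h y hy u hu
  rw [_root_.pd1, heq.fderiv_eq, fderiv_fun_sum fun s _ => (hc s x).mul_const _, sum_apply]
  refine Finset.sum_congr rfl fun s _ => ?_
  rw [fderiv_mul_const (hc s x), smul_apply, smul_eq_mul]
  exact mul_comm _ _

theorem pd2 (h : IsSeparatedSum W g c q) (j : Fin m) :
    IsSeparatedSum W (pd2 j g) c (fun s => pderiv j (q s)) := by
  intro x hx u hu
  have heq : (fun u₁ => g x u₁) =ᶠ[𝓝 u] fun u₁ => ∑ s, c s x * eval u₁.ofLp (q s) := by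
    filter_upwards [isOpen_ball.mem_nhds hu] with v hv using h x hx v hv
  rw [_root_.pd2, heq.fderiv_eq,
    fderiv_fun_sum fun s _ => (differentiable_eval (q s) u).const_mul _, sum_apply]
  refine Finset.sum_congr rfl fun s _ => ?_
  rw [fderiv_const_mul (differentiable_eval (q s) u), smul_apply, smul_eq_mul]
  exact congrArg (c s x * ·) (pdv_eval j (q s) u)

theorem Dx (h : IsSeparatedSum W g c q) (hW : IsOpen W) (hc : ∀ s, ContDiff ℝ ∞ (c s))
    (α : Fin m → ℕ) : IsSeparatedSum W (Dx α g) (fun s => multiIterate pdv α (c s)) q := by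
  have hDx := multiIterate_rel (P := _root_.pd1 (m := m))
    (Q := fun i (c : ι → Evec m → ℝ) s => pdv i (c s))
    (r := fun g c => IsSeparatedSum W g c q ∧ ∀ s, ContDiff ℝ ∞ (c s))
    (fun i g c h => ⟨h.1.pd1 hW (fun s => (h.2 s).differentiable (by simp)) i,
      fun s => contDiff_pdv i (h.2 s) le_rfl⟩) α ⟨h, hc⟩
  have heq := funext (multiIterate_pi_apply (fun i => pdv (m := m) i) α c)
  rw [heq] at hDx
  exact hDx.1

theorem Dv (h : IsSeparatedSum W g c q) (β : Fin m → ℕ) :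
    IsSeparatedSum W (Dv β g) c (fun s => multiIterate (fun j => pderiv j) β (q s)) := by
  have hDv := multiIterate_rel (P := _root_.pd2 (m := m))
    (Q := fun j (q : ι → MvPolynomial (Fin m) ℝ) s => pderiv j (q s))
    (r := fun g q => IsSeparatedSum W g c q) (fun j g c h => h.pd2 j) β h
  have heq := funext (multiIterate_pi_apply (fun j => pderiv (R := ℝ) (σ := Fin m) j) β q)
  rwa [heq] at hDv

theorem Dk_eq (h : IsSeparatedSum W g c q) (hW : IsOpen W) (hc : ∀ s, ContDiff ℝ 2 (c s)) (k : ℕ)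
    {x u : Evec m} (hx : x ∈ W) (hu : u ∈ ball (0 : Evec m) 1) :
    Dk m k g x u =
      eval u.ofLp (bosonicSymbol (m : ℝ) k fun i j => ∑ s, pdv i (pdv j (c s)) x • q s) := by
  have hc0 (s : ι) : Differentiable ℝ (c s) := (hc s).differentiable two_ne_zero
  have hc1 (j : Fin m) (s : ι) : Differentiable ℝ (pdv j (c s)) :=
    (contDiff_pdv (n := 1) j (hc s) (by norm_num)).differentiable one_ne_zero
  have hxx (i : Fin m) := ((h.pd1 hW hc0 i).pd1 hW (hc1 i) i) x hx u hu
  have hxux (i j : Fin m) := (((h.pd1 hW hc0 j).pd2 j).pd1 hW (hc1 j) i) x hx u hu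
  have huxux (i j : Fin m) := ((((h.pd1 hW hc0 j).pd2 j).pd1 hW (hc1 j) i).pd2 i) x hx u hu
  simp only [Dk, hxx, hxux, huxux, bosonicSymbol_apply, map_add, map_sub, map_sum, map_mul,
    map_pow, Derivation.map_smul, MvPolynomial.smul_eval, MvPolynomial.eval_X,
    EuclideanSpace.real_norm_sq_eq]
  ring

theorem isWeaklyPolyharmonicOn (h : IsSeparatedSum W g c q) (hW : IsOpen W)
    (hc : ∀ s, ContDiff ℝ 2 (c s)) {k : ℕ} (hq : ∀ s, (q s).IsHomogeneous k)
    (hqi : LinearIndependent ℝ q) (hm : ∀ j : ℕ, m + 2 * j ≠ 4)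
    (hD : ∀ x ∈ W, ∀ u ∈ ball (0 : Evec m) 1, Dk m k g x u = 0) (s : ι) :
    IsWeaklyPolyharmonicOn (k + 1) (c s) W :=
  isWeaklyPolyharmonicOn_of_bosonicSymbol (μ := (m : ℝ)) (fun j => by exact_mod_cast hm j) hq hqi hc
    (fun x hx => mvPolynomial_eq_zero_of_eval_ball one_pos fun u hu => by
      rw [← h.Dk_eq hW hc k hx hu, hD x hx u hu]) s

end IsSeparatedSum

end SeparatedSum

section DilationDerivative

variable {m : ℕ}

theorem fderiv_self_eq_sum (g : Evec m → ℝ) (y : Evec m) :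
    fderiv ℝ g y y = ∑ i, y i * pdv i g y := by
  rw [← congrArg (fderiv ℝ g y) ((EuclideanSpace.basisFun (Fin m) ℝ).sum_repr y), map_sum]
  simp only [map_smul, smul_eq_mul, EuclideanSpace.basisFun_repr, EuclideanSpace.basisFun_apply,
    pdv]

theorem pdv_coord_mul (i : Fin m) {φ : Evec m → ℝ} {y : Evec m} (hφ : DifferentiableAt ℝ φ y) :
    pdv i (fun y => y i * φ y) y = φ y + y i * pdv i φ y := by
  have hi : HasFDerivAt (fun y : Evec m => y i) (EuclideanSpace.proj i : Evec m →L[ℝ] ℝ) y :=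
    (EuclideanSpace.proj i : Evec m →L[ℝ] ℝ).hasFDerivAt
  rw [pdv, fderiv_fun_mul hi.differentiableAt hφ, hi.fderiv]
  simp [pdv, add_comm]

theorem integral_fderiv_self_mul {g φ : Evec m → ℝ} (hg : ContDiff ℝ 1 g) (hφ : ContDiff ℝ 1 φ)
    (hφs : HasCompactSupport φ) :
    ∫ y, fderiv ℝ g y y * φ y = -∫ y, g y * (m * φ y + fderiv ℝ φ y y) := by
  have hcoord (i : Fin m) : ContDiff ℝ 1 fun y : Evec m => y i * φ y :=
    (contDiff_piLp_apply 2).mul hφ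
  have hcs (i : Fin m) : HasCompactSupport fun y : Evec m => y i * φ y := hφs.mul_left
  have hpdv {i : Fin m} {h : Evec m → ℝ} (hh : ContDiff ℝ 1 h) : Continuous (pdv i h) :=
    (contDiff_pdv (n := 0) i hh (by simp)).continuous
  calc ∫ y, fderiv ℝ g y y * φ y
      = ∑ i, ∫ y, pdv i g y * (y i * φ y) := by
        rw [← integral_finsetSum _ fun i _ => integrable_mul_of_hasCompactSupport (hpdv hg)
          (hcoord i).continuous (hcs i)]
        simp only [fderiv_self_eq_sum, Finset.sum_mul]
        simp only [mul_left_comm, mul_assoc]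
    _ = -∑ i, ∫ y, g y * pdv i (fun y => y i * φ y) y := by
        simp only [fun i => integral_mul_pdv hg (hcoord i) (hcs i) i, Finset.sum_neg_distrib,
          neg_neg]
    _ = -∫ y, g y * (m * φ y + fderiv ℝ φ y y) := by
        rw [← integral_finsetSum _ fun i _ => integrable_mul_of_hasCompactSupport hg.continuous
          (hpdv (hcoord i)) ((hcs i).fderiv_apply ℝ _)]
        simp only [pdv_coord_mul _ (hφ.differentiable one_ne_zero _), fderiv_self_eq_sum,
          ← Finset.mul_sum, Finset.sum_add_distrib, Finset.sum_const, Finset.card_univ,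
          Fintype.card_fin, nsmul_eq_mul]

theorem integral_mul_add_fderiv_self_eq_zero {φ : Evec m → ℝ} (hφ : ContDiff ℝ 1 φ)
    (hφs : HasCompactSupport φ) : ∫ y, (m * φ y + fderiv ℝ φ y y) = 0 := by
  simpa using integral_fderiv_self_mul (contDiff_const (c := (1 : ℝ))) hφ hφs

end DilationDerivative

section Radial

variable {m : ℕ} {h : ℝ → ℝ}

/-- The operator `t d/dt + c`: in the variable `t = ‖y‖²`, dilation derivatives of radial functions
and the radial Laplacian are expressed through it. -/
def eulerOp (c : ℝ) (h : ℝ → ℝ) : ℝ → ℝ := fun t => t * deriv h t + c * h t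

theorem contDiff_deriv (hh : ContDiff ℝ ∞ h) : ContDiff ℝ ∞ (deriv h) :=
  (contDiff_infty_iff_deriv.1 hh).2

theorem deriv_eulerOp (c : ℝ) (hh : ContDiff ℝ ∞ h) :
    deriv (eulerOp c h) = eulerOp (c + 1) (deriv h) := by
  funext t
  have hh' : HasDerivAt h (deriv h t) t := (hh.differentiable (by simp) t).hasDerivAt
  have hh'' : HasDerivAt (deriv h) (deriv (deriv h) t) t :=
    ((contDiff_deriv hh).differentiable (by simp) t).hasDerivAt
  refine (((hasDerivAt_id t).mul hh'').add (hh'.const_mul c)).deriv.trans ?_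
  simp only [id_eq, eulerOp]
  ring

/-- Profiles of radial functions supported in the unit ball, as functions of `t = ‖y‖²`: smooth
functions vanishing on `[1, ∞)`. -/
structure IsBallProfile (h : ℝ → ℝ) : Prop where
  contDiff : ContDiff ℝ ∞ h
  eq_zero : ∀ t, 1 ≤ t → h t = 0

namespace IsBallProfile

protected theorem deriv (hh : IsBallProfile h) : IsBallProfile (deriv h) := by
  refine ⟨contDiff_deriv hh.contDiff, fun t ht => ?_⟩
  have hderiv := (hh.contDiff.differentiable (by simp) t).hasDerivAt.hasDerivWithinAt
    (s := Set.Ici t)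
  have hzero : HasDerivWithinAt h 0 (Set.Ici t) t :=
    (hasDerivWithinAt_const t (Set.Ici t) (0 : ℝ)).congr
      (fun s hs => hh.eq_zero s (ht.trans hs)) (hh.eq_zero t ht)
  exact (uniqueDiffOn_Ici t t Set.self_mem_Ici).eq_deriv _ hderiv hzero

protected theorem eulerOp (hh : IsBallProfile h) (c : ℝ) : IsBallProfile (eulerOp c h) :=
  ⟨(contDiff_id.mul hh.deriv.contDiff).add (contDiff_const.mul hh.contDiff), fun t ht => by
    simp only [eulerOp, hh.deriv.eq_zero t ht, hh.eq_zero t ht, mul_zero, add_zero]⟩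

theorem const_mul (hh : IsBallProfile h) (c : ℝ) : IsBallProfile fun t => c * h t :=
  ⟨contDiff_const.mul hh.contDiff, fun t ht => by rw [hh.eq_zero t ht, mul_zero]⟩

theorem iterate_deriv (hh : IsBallProfile h) (n : ℕ) : IsBallProfile (_root_.deriv^[n] h) := by
  induction n with
  | zero => exact hh
  | succ n ih => exact (Function.iterate_succ_apply' _root_.deriv n h).symm ▸ ih.deriv

theorem iterate_deriv_eulerOp (hh : IsBallProfile h) (c : ℝ) (n : ℕ) :
    _root_.deriv^[n] (_root_.eulerOp c h) = _root_.eulerOp (c + n) (_root_.deriv^[n] h) := by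
  induction n with
  | zero => simp only [Function.iterate_zero, id_eq, Nat.cast_zero, add_zero]
  | succ n ih =>
    rw [Function.iterate_succ_apply', ih, deriv_eulerOp _ (hh.iterate_deriv n).contDiff,
      Function.iterate_succ_apply', Nat.cast_succ, add_assoc]

theorem exists_deriv_eq (hh : IsBallProfile h) :
    ∃ H : ℝ → ℝ, IsBallProfile H ∧ _root_.deriv H = h := by
  have hderiv (t : ℝ) : HasDerivAt (fun t => ∫ s in (1 : ℝ)..t, h s) (h t) t :=
    hh.contDiff.continuous.integral_hasStrictDerivAt 1 t |>.hasDerivAt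
  have hderiv_eq : _root_.deriv (fun t => ∫ s in (1 : ℝ)..t, h s) = h :=
    funext fun t => (hderiv t).deriv
  refine ⟨fun t => ∫ s in (1 : ℝ)..t, h s, ⟨?_, fun t ht => ?_⟩, hderiv_eq⟩
  · rw [contDiff_infty_iff_deriv, hderiv_eq]
    exact ⟨fun t => (hderiv t).differentiableAt, hh.contDiff⟩
  · refine intervalIntegral.integral_zero_ae (Eventually.of_forall fun s hs => ?_)
    rw [Set.uIoc_of_le ht] at hs
    exact hh.eq_zero s hs.1.le

theorem exists_iterate_deriv_eq (hh : IsBallProfile h) (n : ℕ) :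
    ∃ H : ℝ → ℝ, IsBallProfile H ∧ _root_.deriv^[n] H = h := by
  induction n with
  | zero => exact ⟨h, hh, rfl⟩
  | succ n ih =>
    obtain ⟨H, hH, hHh⟩ := ih
    obtain ⟨H', hH', rfl⟩ := hH.exists_deriv_eq
    exact ⟨H', hH', hHh⟩

end IsBallProfile

/-- The operator on profiles such that `Δ (h(‖y‖²)) = 4 (radialLapl m h)(‖y‖²)` on `ℝ^m`. -/
def radialLapl (m : ℕ) (h : ℝ → ℝ) : ℝ → ℝ := eulerOp (m / 2) (deriv h)

theorem IsBallProfile.iterate_radialLapl (hh : IsBallProfile h) (m n : ℕ) :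
    IsBallProfile ((radialLapl m)^[n] h) := by
  induction n with
  | zero => exact hh
  | succ n ih => exact (Function.iterate_succ_apply' (radialLapl m) n h).symm ▸ ih.deriv.eulerOp _

/-- The radial function on `ℝ^m` with profile `h` in the variable `‖y‖²`. -/
def rad (m : ℕ) (h : ℝ → ℝ) : Evec m → ℝ := fun y => h (‖y‖ ^ 2)

theorem contDiff_rad (hh : ContDiff ℝ ∞ h) : ContDiff ℝ ∞ (rad m h) :=
  hh.comp (contDiff_norm_sq ℝ)

theorem IsBallProfile.tsupport_rad_subset (hh : IsBallProfile h) :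
    tsupport (rad m h) ⊆ closedBall 0 1 := by
  refine closure_minimal (fun y hy => ?_) isClosed_closedBall
  contrapose! hy
  rw [mem_closedBall_zero_iff, not_le] at hy
  exact Function.notMem_support.2 (hh.eq_zero _ (one_le_pow₀ hy.le))

theorem hasCompactSupport_of_tsupport_subset {g : Evec m → ℝ} {b : Evec m} {r : ℝ}
    (h : tsupport g ⊆ closedBall b r) : HasCompactSupport g :=
  (isCompact_closedBall b r).of_isClosed_subset (isClosed_tsupport g) h

theorem IsBallProfile.hasCompactSupport_rad (hh : IsBallProfile h) : HasCompactSupport (rad m h) :=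
  hasCompactSupport_of_tsupport_subset hh.tsupport_rad_subset

theorem fderiv_rad (hh : ContDiff ℝ ∞ h) (y v : Evec m) :
    fderiv ℝ (rad m h) y v = 2 * ⟪y, v⟫ * rad m (deriv h) y := by
  have hh' : HasDerivAt h (deriv h (‖y‖ ^ 2)) (‖y‖ ^ 2) :=
    (hh.differentiable (by simp) _).hasDerivAt
  have hcomp : HasFDerivAt (rad m h) _ y :=
    hh'.comp_hasFDerivAt y (hasStrictFDerivAt_norm_sq y).hasFDerivAt
  rw [hcomp.fderiv, rad, smul_apply, smul_apply, innerSL_apply_apply, smul_eq_mul, nsmul_eq_mul]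
  push_cast
  ring

theorem pdv_rad (hh : ContDiff ℝ ∞ h) (i : Fin m) (y : Evec m) :
    pdv i (rad m h) y = 2 * (y i * rad m (deriv h) y) := by
  rw [pdv, fderiv_rad hh, EuclideanSpace.inner_single_right, one_mul, conj_trivial, mul_assoc]

theorem rad_eulerOp (c : ℝ) (hh : ContDiff ℝ ∞ h) (y : Evec m) :
    2 * rad m (eulerOp c h) y = 2 * c * rad m h y + fderiv ℝ (rad m h) y y := by
  rw [fderiv_rad hh, real_inner_self_eq_norm_sq]
  simp only [rad, eulerOp]
  ring

theorem pdv_const_mul (i : Fin m) (c : ℝ) (g : Evec m → ℝ) :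
    pdv i (fun y => c * g y) = fun y => c * pdv i g y := by
  funext y
  exact congrArg (fun A : Evec m →L[ℝ] ℝ => A (EuclideanSpace.single i 1))
    (congrFun (fderiv_const_smul_field (f := g) c) y)

theorem lapl_const_mul (c : ℝ) (g : Evec m → ℝ) :
    lapl (fun y => c * g y) = fun y => c * lapl g y := by
  funext y
  simp only [lapl, pdv_const_mul, Finset.mul_sum]

theorem lapl_rad (hh : ContDiff ℝ ∞ h) :
    lapl (rad m h) = fun y => 4 * rad m (radialLapl m h) y := by
  have hd := contDiff_deriv hh
  funext y
  have hcoord (i : Fin m) : pdv i (pdv i (rad m h)) y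
      = 2 * (rad m (deriv h) y + y i * pdv i (rad m (deriv h)) y) := by
    rw [funext (pdv_rad hh i), pdv_const_mul]
    exact congrArg (2 * ·) (pdv_coord_mul i ((contDiff_rad hd).differentiable (by simp) y))
  simp only [radialLapl, lapl, hcoord, ← Finset.mul_sum, Finset.sum_add_distrib, Finset.sum_const,
    Finset.card_univ, Fintype.card_fin, nsmul_eq_mul, ← fderiv_self_eq_sum]
  linear_combination -2 * rad_eulerOp (m / 2) hd y

theorem IsBallProfile.lapl_iterate_rad (hh : IsBallProfile h) (n : ℕ) :
    lapl^[n] (rad m h) = fun y => 4 ^ n * rad m ((radialLapl m)^[n] h) y := by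
  induction n with
  | zero => simp only [Function.iterate_zero, id_eq, pow_zero, one_mul]
  | succ n ih =>
    rw [Function.iterate_succ_apply', ih, lapl_const_mul,
      lapl_rad (hh.iterate_radialLapl m n).contDiff, Function.iterate_succ_apply']
    funext y
    ring

namespace IsBallProfile

theorem integral_rad_eulerOp (hh : IsBallProfile h) (j : ℝ) :
    ∫ y, rad m (_root_.eulerOp (m / 2 + j) h) y = j * ∫ y, rad m h y := by
  have hdiv : ∫ y, (m * rad m h y + fderiv ℝ (rad m h) y y) = 0 :=
    integral_mul_add_fderiv_self_eq_zero
      ((contDiff_rad hh.contDiff).of_le (WithTop.coe_le_coe.2 le_top)) hh.hasCompactSupport_rad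
  have hint {g : ℝ → ℝ} (hg : IsBallProfile g) : Integrable (rad m g) :=
    (contDiff_rad hg.contDiff).continuous.integrable_of_hasCompactSupport hg.hasCompactSupport_rad
  have hsplit (y : Evec m) : rad m (_root_.eulerOp (m / 2 + j) h) y - j * rad m h y
      = 2⁻¹ * (m * rad m h y + fderiv ℝ (rad m h) y y) := by
    linear_combination 2⁻¹ * rad_eulerOp (m / 2 + j) hh.contDiff y
  rw [← sub_eq_zero, ← integral_const_mul,
    ← integral_sub (hint (hh.eulerOp _)) ((hint hh).const_mul j)]
  simp only [hsplit]
  rw [integral_const_mul, hdiv, mul_zero]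

theorem integral_rad_iterate_deriv_iterate_radialLapl (hh : IsBallProfile h) (j n : ℕ) :
    ∫ y, rad m (_root_.deriv^[j] ((radialLapl m)^[n] h)) y
      = j.ascFactorial n * ∫ y, rad m (_root_.deriv^[j + n] h) y := by
  induction n generalizing h with
  | zero => simp only [Function.iterate_zero, id_eq, Nat.ascFactorial_zero, Nat.cast_one, one_mul,
      add_zero]
  | succ n ih =>
    rw [Function.iterate_succ_apply, ih (h := radialLapl m h) (hh.deriv.eulerOp _), radialLapl,
      hh.deriv.iterate_deriv_eulerOp, (hh.deriv.iterate_deriv _).integral_rad_eulerOp,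
      ← Function.iterate_succ_apply _root_.deriv, Nat.ascFactorial_succ, ← add_assoc]
    push_cast
    ring

end IsBallProfile

theorem exists_isBallProfile_integral_rad_eq (m : ℕ) (a : ℝ) :
    ∃ h : ℝ → ℝ, IsBallProfile h ∧ ∫ y, rad m h y = a := by
  have hχ : IsBallProfile fun t => Real.smoothTransition (1 - t) :=
    ⟨Real.smoothTransition.contDiff.comp (contDiff_const.sub contDiff_id),
      fun t ht => Real.smoothTransition.zero_of_nonpos (by linarith)⟩
  have hpos : 0 < ∫ y, rad m (fun t => Real.smoothTransition (1 - t)) y :=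
    (contDiff_rad hχ.contDiff).continuous.integral_pos_of_hasCompactSupport_nonneg_nonzero
      hχ.hasCompactSupport_rad (fun y => Real.smoothTransition.nonneg _) (x := 0)
      (Real.smoothTransition.pos_of_pos (by simp)).ne'
  exact ⟨_, hχ.const_mul (a / _), (integral_const_mul _ _).trans (div_mul_cancel₀ a hpos.ne')⟩

/-- A polyharmonic averaging kernel of order `n`: a smooth function of integral one on the unit
ball whose dilation derivative `m φ + y · ∇φ` is `Δⁿ` of a smooth function on the unit ball. Its
dilations then all have the same pairing with an `n`-polyharmonic function. -/
structure IsPolyharmonicKernel (n : ℕ) (φ : Evec m → ℝ) : Prop where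
  contDiff : ContDiff ℝ ∞ φ
  tsupport_subset : tsupport φ ⊆ closedBall 0 1
  integral_eq_one : ∫ y, φ y = 1
  exists_lapl_iterate : ∃ ψ : Evec m → ℝ, ContDiff ℝ ∞ ψ ∧ tsupport ψ ⊆ closedBall 0 1 ∧
    ∀ y, m * φ y + fderiv ℝ φ y y = lapl^[n] ψ y

-- With `ψ = rad m h`, `(m + y·∇) φ = Δⁿ⁺¹ ψ` is an identity of profiles because
-- `radialLapl m = eulerOp (m / 2) ∘ deriv`; the integral of `φ` is then a multiple of that of the
-- radial function with profile `deriv^[n + 1] h`, which is prescribed by integrating `n + 1` times.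
theorem exists_isPolyharmonicKernel (m n : ℕ) :
    ∃ φ : Evec m → ℝ, IsPolyharmonicKernel (n + 1) φ := by
  obtain ⟨χ, hχ, hχI⟩ := exists_isBallProfile_integral_rad_eq m
    (2 * 4⁻¹ ^ (n + 1) / ((1 : ℕ).ascFactorial n : ℝ))
  obtain ⟨h, hh, rfl⟩ := hχ.exists_iterate_deriv_eq (n + 1)
  set p : ℝ → ℝ := fun t => (2⁻¹ * 4 ^ (n + 1)) * deriv ((radialLapl m)^[n] h) t with hp_def
  have hp : IsBallProfile p := (hh.iterate_radialLapl m n).deriv.const_mul _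
  refine ⟨rad m p, contDiff_rad hp.contDiff, hp.tsupport_rad_subset, ?_, rad m h,
    contDiff_rad hh.contDiff, hh.tsupport_rad_subset, fun y => ?_⟩
  · have hI := hh.integral_rad_iterate_deriv_iterate_radialLapl (m := m) 1 n
    rw [add_comm 1 n, hχI, Function.iterate_one] at hI
    have hfac : ((1 : ℕ).ascFactorial n : ℝ) ≠ 0 := by
      rw [Nat.one_ascFactorial]
      exact Nat.cast_ne_zero.2 n.factorial_ne_zero
    refine (integral_const_mul _ _).trans ((congrArg _ hI).trans ?_)
    field_simp
    rw [← mul_pow]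
    norm_num
  · rw [hh.lapl_iterate_rad, Function.iterate_succ_apply', radialLapl]
    have hfactor : rad m (eulerOp (m / 2) p) y
        = 2⁻¹ * 4 ^ (n + 1) * rad m (eulerOp (m / 2) (deriv ((radialLapl m)^[n] h))) y := by
      simp only [rad, eulerOp, hp_def, deriv_const_mul_field]
      ring
    linear_combination 2 * hfactor - rad_eulerOp (m / 2) hp.contDiff y

end Radial

section MeanValue

variable {m n : ℕ} {c φ : Evec m → ℝ} {W : Set (Evec m)}

theorem pdv_comp_smul_sub (i : Fin m) (g : Evec m → ℝ) (τ : ℝ) (b : Evec m) :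
    pdv i (fun y => g (τ • (y - b))) = fun y => τ * pdv i g (τ • (y - b)) := by
  funext y
  rw [pdv, fderiv_comp_sub (f := fun y => g (τ • y)) b, fderiv_comp_smul]
  rfl

theorem lapl_iterate_comp_smul_sub (g : Evec m → ℝ) (τ : ℝ) (b : Evec m) (n : ℕ) :
    lapl^[n] (fun y => g (τ • (y - b))) = fun y => τ ^ (2 * n) * lapl^[n] g (τ • (y - b)) := by
  induction n with
  | zero => simp only [Function.iterate_zero, id_eq, mul_zero, pow_zero, one_mul]
  | succ n ih =>
    rw [Function.iterate_succ_apply', Function.iterate_succ_apply', ih, lapl_const_mul]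
    funext y
    simp only [lapl, pdv_comp_smul_sub, pdv_const_mul, Finset.mul_sum]
    exact Finset.sum_congr rfl fun i _ => by ring

theorem contDiff_comp_smul_sub {g : Evec m → ℝ} (hg : ContDiff ℝ ∞ g) (τ : ℝ) (b : Evec m) :
    ContDiff ℝ ∞ fun y => g (τ • (y - b)) :=
  hg.comp (by fun_prop)

theorem tsupport_comp_smul_sub_subset {g : Evec m → ℝ} (hg : tsupport g ⊆ closedBall 0 1) {τ : ℝ}
    (hτ : τ ≠ 0) (b : Evec m) : tsupport (fun y => g (τ • (y - b))) ⊆ closedBall b |τ|⁻¹ := by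
  refine closure_minimal (fun y hy => ?_) isClosed_closedBall
  have hy1 := hg (subset_tsupport g hy)
  rwa [mem_closedBall_zero_iff, norm_smul, ← le_inv_mul_iff₀ (norm_pos_iff.2 hτ), mul_one,
    ← dist_eq_norm] at hy1

theorem integral_comp_sub_smul (F : Evec m → ℝ) (b : Evec m) (t : ℝ) :
    ∫ z, F (b - t • z) = |(t ^ m)⁻¹| * ∫ y, F y := by
  rw [Measure.integral_comp_smul volume (fun z => F (b - z)) t, integral_sub_left_eq_self F,
    finrank_euclideanSpace_fin, smul_eq_mul]

theorem integral_comp_sub_smul_mul (c g : Evec m → ℝ) (b : Evec m) {t : ℝ} (ht : t ≠ 0) :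
    ∫ z, c (b - t • z) * g z = |(t ^ m)⁻¹| * ∫ y, c y * g (-t⁻¹ • (y - b)) := by
  have hinv (z : Evec m) : -t⁻¹ • (b - t • z - b) = z := by
    rw [sub_sub_cancel_left, neg_smul_neg, inv_smul_smul₀ ht]
  simp only [← integral_comp_sub_smul _ b, hinv]

theorem hasDerivAt_integral_comp_sub_smul_mul (hc : ContDiff ℝ 1 c) (hφ : Continuous φ)
    (hφs : HasCompactSupport φ) (b : Evec m) (t : ℝ) :
    HasDerivAt (fun t : ℝ => ∫ z, c (b - t • z) * φ z)
      (∫ z, -fderiv ℝ c (b - t • z) z * φ z) t := by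
  have hcont (t : ℝ) : Continuous fun z => c (b - t • z) := hc.continuous.comp (by fun_prop)
  have hcont' : Continuous fun p : ℝ × Evec m => -fderiv ℝ c (b - p.1 • p.2) p.2 :=
    (((hc.continuous_fderiv one_ne_zero).comp (by fun_prop)).clm_apply continuous_snd).neg
  obtain ⟨C, hC⟩ := ((isCompact_closedBall t 1).prod hφs).exists_bound_of_continuousOn
    hcont'.continuousOn
  refine (hasDerivAt_integral_of_dominated_loc_of_deriv_le (bound := fun z => C * ‖φ z‖)
    (F := fun t z => c (b - t • z) * φ z) (F' := fun t z => -fderiv ℝ c (b - t • z) z * φ z)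
    (ball_mem_nhds t one_pos)
    (Eventually.of_forall fun t => ((hcont t).mul hφ).aestronglyMeasurable)
    (integrable_mul_of_hasCompactSupport (hcont t) hφ hφs)
    ((hcont'.comp (by fun_prop : Continuous fun z : Evec m => (t, z))).mul
      hφ).aestronglyMeasurable
    (Eventually.of_forall fun z s hs => ?_)
    ((hφ.norm.integrable_of_hasCompactSupport hφs.norm).const_mul C)
    (Eventually.of_forall fun z s _ => ?_)).2
  · rw [norm_mul]
    by_cases hz : z ∈ tsupport φ
    · gcongr
      exact hC (s, z) ⟨ball_subset_closedBall hs, hz⟩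
    · simp only [image_eq_zero_of_notMem_tsupport hz, norm_zero, mul_zero, le_refl]
  · have hline : HasDerivAt (fun s : ℝ => b - s • z) (-z) s := by
      simpa only [one_smul] using ((hasDerivAt_id' s).smul_const z).const_sub b
    rw [← map_neg]
    exact ((hc.differentiable one_ne_zero _).hasFDerivAt.comp_hasDerivAt s hline).mul_const (φ z)

theorem IsWeaklyPolyharmonicOn.integral_comp_sub_smul_mul_lapl_iterate
    (hc : IsWeaklyPolyharmonicOn n c W) {ψ : Evec m → ℝ} (hψ : ContDiff ℝ ∞ ψ)
    (hψs : tsupport ψ ⊆ closedBall 0 1) {b : Evec m} {t : ℝ} (ht : 0 < t)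
    (hb : closedBall b t ⊆ W) : ∫ z, c (b - t • z) * lapl^[n] ψ z = 0 := by
  have hτ : -t⁻¹ ≠ 0 := neg_ne_zero.2 (inv_ne_zero ht.ne')
  have hsupp := tsupport_comp_smul_sub_subset hψs hτ b
  have htest := hc _ ⟨contDiff_comp_smul_sub hψ (-t⁻¹) b,
    hasCompactSupport_of_tsupport_subset hsupp,
    hsupp.trans (by rwa [abs_neg, abs_inv, inv_inv, abs_of_pos ht])⟩
  simp only [lapl_iterate_comp_smul_sub, mul_left_comm (c _)] at htest
  rw [integral_const_mul] at htest
  rw [integral_comp_sub_smul_mul _ _ _ ht.ne',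
    (mul_eq_zero.1 htest).resolve_left (pow_ne_zero _ hτ), mul_zero]

theorem hasDerivAt_integral_comp_sub_smul_mul_zero (hφ : IsPolyharmonicKernel n φ)
    (hc : ContDiff ℝ 1 c) (hcW : IsWeaklyPolyharmonicOn n c W) {b : Evec m} {t : ℝ} (ht : 0 < t)
    (hb : closedBall b t ⊆ W) : HasDerivAt (fun t : ℝ => ∫ z, c (b - t • z) * φ z) 0 t := by
  obtain ⟨ψ, hψ, hψs, hφψ⟩ := hφ.exists_lapl_iterate
  have hφs := hasCompactSupport_of_tsupport_subset hφ.tsupport_subset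
  have hfderiv (z : Evec m) :
      fderiv ℝ (fun z => c (b - t • z)) z z = t * -fderiv ℝ c (b - t • z) z := by
    have hline : HasFDerivAt (fun z : Evec m => b - t • z) (-(t • ContinuousLinearMap.id ℝ _)) z :=
      ((hasFDerivAt_id z).const_smul t).const_sub b
    have hcomp : HasFDerivAt (fun z => c (b - t • z))
        ((fderiv ℝ c (b - t • z)).comp (-(t • ContinuousLinearMap.id ℝ _))) z :=
      (hc.differentiable one_ne_zero _).hasFDerivAt.comp z hline
    rw [hcomp.fderiv]
    simp
  have hzero := integral_fderiv_self_mul (g := fun z => c (b - t • z))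
    (hc.comp (contDiff_const.sub (contDiff_const_smul t)))
    (hφ.contDiff.of_le (WithTop.coe_le_coe.2 le_top)) hφs
  simp only [hfderiv, hφψ, mul_assoc t] at hzero
  rw [integral_const_mul, hcW.integral_comp_sub_smul_mul_lapl_iterate hψ hψs ht hb, neg_zero]
    at hzero
  rw [← (mul_eq_zero.1 hzero).resolve_left ht.ne']
  exact hasDerivAt_integral_comp_sub_smul_mul hc hφ.contDiff.continuous hφs b t

theorem IsWeaklyPolyharmonicOn.eq_integral_comp_sub_smul_mul (hcW : IsWeaklyPolyharmonicOn n c W)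
    (hφ : IsPolyharmonicKernel n φ) (hc : ContDiff ℝ 1 c) {b : Evec m} {R : ℝ} (hR : 0 < R)
    (hb : closedBall b R ⊆ W) : c b = ∫ z, c (b - R • z) * φ z := by
  set K : ℝ → ℝ := fun t => ∫ z, c (b - t • z) * φ z with hK_def
  have hK (t : ℝ) : ContinuousAt K t :=
    (hasDerivAt_integral_comp_sub_smul_mul hc hφ.contDiff.continuous
      (hasCompactSupport_of_tsupport_subset hφ.tsupport_subset) b t).continuousAt
  obtain ⟨t, -, ht⟩ := exists_hasDerivAt_eq_slope K (fun _ => 0) hR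
    (fun t _ => (hK t).continuousWithinAt) fun t ht =>
      hasDerivAt_integral_comp_sub_smul_mul_zero hφ hc hcW ht.1
        ((closedBall_subset_closedBall ht.2.le).trans hb)
  have hKR : K R = K 0 :=
    sub_eq_zero.1 ((div_eq_zero_iff.1 ht.symm).resolve_right (sub_ne_zero.2 hR.ne'))
  calc c b = K 0 := by
        simp only [hK_def, zero_smul, sub_zero, integral_const_mul, hφ.integral_eq_one, mul_one]
    _ = K R := hKR.symm

end MeanValue

section CauchyEstimates

open scoped Convolution

variable {m n : ℕ} {c φ : Evec m → ℝ} {W : Set (Evec m)}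

/-- The rescaled kernel `y ↦ R^{-m} φ(y/R)`. -/
def mollifier (φ : Evec m → ℝ) (R : ℝ) : Evec m → ℝ := fun y => R⁻¹ ^ m * φ (R⁻¹ • y)

theorem contDiff_mollifier (hφ : ContDiff ℝ ∞ φ) (R : ℝ) : ContDiff ℝ ∞ (mollifier φ R) :=
  contDiff_const.mul (hφ.comp (contDiff_const_smul _))

theorem tsupport_comp_inv_smul_subset (hφ : tsupport φ ⊆ closedBall 0 1) {R : ℝ} (hR : 0 < R) :
    tsupport (fun y => φ (R⁻¹ • y)) ⊆ closedBall 0 R := by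
  simpa [abs_of_pos hR] using
    tsupport_comp_smul_sub_subset hφ (inv_ne_zero hR.ne') 0

theorem hasCompactSupport_mollifier (hφ : tsupport φ ⊆ closedBall 0 1) {R : ℝ} (hR : 0 < R) :
    HasCompactSupport (mollifier φ R) :=
  (hasCompactSupport_of_tsupport_subset (tsupport_comp_inv_smul_subset hφ hR)).mul_left

theorem IsWeaklyPolyharmonicOn.eq_convolution_mollifier (hcW : IsWeaklyPolyharmonicOn n c W)
    (hφ : IsPolyharmonicKernel n φ) (hc : ContDiff ℝ 1 c) {b : Evec m} {R : ℝ} (hR : 0 < R)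
    (hb : closedBall b R ⊆ W) : c b = (c ⋆[ContinuousLinearMap.mul ℝ ℝ] mollifier φ R) b := by
  rw [hcW.eq_integral_comp_sub_smul_mul hφ hc hR hb, integral_comp_sub_smul_mul _ _ _ hR.ne',
    convolution_def, ← integral_const_mul]
  congr 1 with y
  rw [ContinuousLinearMap.mul_apply', mollifier, abs_of_pos (by positivity), inv_pow, neg_smul,
    ← smul_neg, neg_sub]
  ring

theorem contDiff_multiIterate_pdv (hφ : ContDiff ℝ ∞ φ) (α : Fin m → ℕ) :
    ContDiff ℝ ∞ (multiIterate pdv α φ) :=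
  multiIterate_induction (fun i _ h => contDiff_pdv i h le_rfl) α hφ

theorem tsupport_multiIterate_pdv_subset (φ : Evec m → ℝ) (α : Fin m → ℕ) :
    tsupport (multiIterate pdv α φ) ⊆ tsupport φ :=
  multiIterate_induction (p := fun g => tsupport g ⊆ tsupport φ)
    (fun _ _ h => (tsupport_fderiv_apply_subset ℝ _).trans h) α subset_rfl

theorem multiIterate_pdv_mollifier (φ : Evec m → ℝ) (R : ℝ) (α : Fin m → ℕ) :
    multiIterate pdv α (mollifier φ R)
      = fun y => R⁻¹ ^ (m + ∑ i, α i) * multiIterate pdv α φ (R⁻¹ • y) := by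
  refine multiIterate_rel_graded (P := pdv) (Q := pdv)
    (r := fun n g h => g = fun y => R⁻¹ ^ n * h (R⁻¹ • y)) (fun n i g h hgh => ?_) α rfl
  have hdil := pdv_comp_smul_sub i h R⁻¹ 0
  simp only [sub_zero] at hdil
  rw [hgh, pdv_const_mul, hdil]
  funext y
  ring

theorem pdv_convolution {g : Evec m → ℝ} (hc : Continuous c) (hg : ContDiff ℝ 1 g)
    (hgs : HasCompactSupport g) (i : Fin m) :
    pdv i (c ⋆[ContinuousLinearMap.mul ℝ ℝ] g) = c ⋆[ContinuousLinearMap.mul ℝ ℝ] pdv i g := by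
  funext x
  rw [pdv, (hgs.hasFDerivAt_convolution_right _ hc.locallyIntegrable hg x).fderiv,
    convolution_precompR_apply _ hc.locallyIntegrable (hgs.fderiv ℝ)
      (hg.continuous_fderiv one_ne_zero)]
  rfl

theorem multiIterate_pdv_convolution {g : Evec m → ℝ} (hc : Continuous c) (hg : ContDiff ℝ ∞ g)
    (hgs : HasCompactSupport g) (α : Fin m → ℕ) :
    multiIterate pdv α (c ⋆[ContinuousLinearMap.mul ℝ ℝ] g)
      = c ⋆[ContinuousLinearMap.mul ℝ ℝ] multiIterate pdv α g :=
  (multiIterate_rel (P := pdv (m := m)) (Q := pdv)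
    (r := fun h g => ContDiff ℝ ∞ g ∧ HasCompactSupport g ∧
      h = c ⋆[ContinuousLinearMap.mul ℝ ℝ] g)
    (fun i h g hg => ⟨contDiff_pdv i hg.1 le_rfl, hg.2.1.fderiv_apply ℝ _, by
      rw [hg.2.2, pdv_convolution hc (hg.1.of_le (WithTop.coe_le_coe.2 le_top)) hg.2.1]⟩)
    α ⟨hg, hgs, rfl⟩).2.2

theorem abs_convolution_comp_inv_smul_le {g : Evec m → ℝ} (hg : tsupport g ⊆ closedBall 0 1)
    {C : ℝ} (hC : ∀ y, ‖g y‖ ≤ C) (hc : Continuous c) (a : Evec m) {R : ℝ} (hR : 0 < R) :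
    |(c ⋆[ContinuousLinearMap.mul ℝ ℝ] fun y => g (R⁻¹ • y)) a|
      ≤ C * ∫ x in closedBall a R, |c x| := by
  rw [convolution_def, ← integral_const_mul, ← integral_indicator measurableSet_closedBall,
    ← Real.norm_eq_abs]
  refine norm_integral_le_of_norm_le (IntegrableOn.integrable_indicator
    ((continuous_const.mul hc.abs).continuousOn.integrableOn_compact (isCompact_closedBall _ _))
    measurableSet_closedBall) (Eventually.of_forall fun y => ?_)
  rw [ContinuousLinearMap.mul_apply', norm_mul]
  by_cases hy : y ∈ closedBall a R
  · rw [Set.indicator_of_mem hy, mul_comm]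
    exact mul_le_mul_of_nonneg_right (hC _) (norm_nonneg _)
  · have hay : a - y ∉ tsupport fun y => g (R⁻¹ • y) := fun h => hy <| by
      have hay := tsupport_comp_inv_smul_subset hg hR h
      rwa [mem_closedBall_zero_iff, ← dist_eq_norm, dist_comm] at hay
    rw [Set.indicator_of_notMem hy, image_eq_zero_of_notMem_tsupport hay, norm_zero, mul_zero]

theorem exists_abs_multiIterate_pdv_convolution_mollifier_le (hφ : ContDiff ℝ ∞ φ)
    (hφs : tsupport φ ⊆ closedBall 0 1) (α : Fin m → ℕ) :
    ∃ C : ℝ, 0 ≤ C ∧ ∀ c : Evec m → ℝ, Continuous c → ∀ (a : Evec m) (R : ℝ), 0 < R →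
      |multiIterate pdv α (c ⋆[ContinuousLinearMap.mul ℝ ℝ] mollifier φ R) a|
        ≤ C * R⁻¹ ^ (m + ∑ i, α i) * ∫ x in closedBall a R, |c x| := by
  have hsupp := (tsupport_multiIterate_pdv_subset φ α).trans hφs
  obtain ⟨C, hC⟩ := (hasCompactSupport_of_tsupport_subset hsupp).exists_bound_of_continuous
    (contDiff_multiIterate_pdv hφ α).continuous
  refine ⟨C, (norm_nonneg _).trans (hC 0), fun c hc a R hR => ?_⟩
  rw [multiIterate_pdv_convolution hc (contDiff_mollifier hφ R)
    (hasCompactSupport_mollifier hφs hR), multiIterate_pdv_mollifier]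
  have hsmul : (fun y => R⁻¹ ^ (m + ∑ i, α i) * multiIterate pdv α φ (R⁻¹ • y))
      = R⁻¹ ^ (m + ∑ i, α i) • fun y => multiIterate pdv α φ (R⁻¹ • y) := rfl
  rw [hsmul, convolution_smul, Pi.smul_apply, smul_eq_mul, abs_mul,
    abs_of_nonneg (by positivity), mul_comm C, mul_assoc]
  gcongr
  exact abs_convolution_comp_inv_smul_le hsupp hC hc a hR

end CauchyEstimates

section FiniteDimensional

theorem exists_contDiff_eqOn {E F : Type*} [NormedAddCommGroup E] [NormedSpace ℝ E]
    [FiniteDimensional ℝ E] [NormedAddCommGroup F] [NormedSpace ℝ F] {n : ℕ∞} {f : E → F}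
    {Ω s : Set E} (hf : ContDiffOn ℝ n f Ω) (hΩ : IsOpen Ω) (hs : IsClosed s) (hsΩ : s ⊆ Ω) :
    ∃ g : E → F, ContDiff ℝ n g ∧ Set.EqOn g f s := by
  obtain ⟨χ, hχ0, hχ1, -⟩ := exists_contMDiffMap_zero_one_nhds_of_isClosed
    (modelWithCornersSelf ℝ E) (n := n) hΩ.isClosed_compl hs
    (Set.disjoint_compl_left_iff_subset.2 hsΩ)
  refine ⟨fun x => χ x • f x, contDiff_iff_contDiffAt.2 fun x => ?_, fun x hx => ?_⟩
  · by_cases hx : x ∈ Ω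
    · exact χ.contMDiff.contDiff.contDiffAt.smul (hf.contDiffAt (hΩ.mem_nhds hx))
    · refine contDiffAt_const (c := (0 : F)) |>.congr_of_eventuallyEq ?_
      filter_upwards [eventually_nhdsSet_iff_forall.1 hχ0 x hx] with y hy
      rw [hy, zero_smul]
  · beta_reduce
    rw [hχ1.self_of_nhdsSet x hx, one_smul]

variable {ι : Type*} [Fintype ι]

theorem exists_norm_le_integral_abs_sum {Y : Type*} [MeasurableSpace Y] {μ : Measure Y}
    {e : ι → Y → ℝ} (he : ∀ s, Integrable (e s) μ)
    (hli : ∀ v : ι → ℝ, (fun y => ∑ s, v s * e s y) =ᵐ[μ] 0 → v = 0) :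
    ∃ C : ℝ, 0 ≤ C ∧ ∀ v : ι → ℝ, ‖v‖ ≤ C * ∫ y, |∑ s, v s * e s y| ∂μ := by
  have hint (v : ι → ℝ) : Integrable (fun y => ∑ s, v s * e s y) μ :=
    integrable_finsetSum _ fun s _ => (he s).const_mul (v s)
  let L : (ι → ℝ) →ₗ[ℝ] (Y →₁[μ] ℝ) :=
    { toFun := fun v => (hint v).toL1 _
      map_add' := fun v w => by
        rw [← Integrable.toL1_add]
        simp only [Pi.add_def, add_mul, Finset.sum_add_distrib]
      map_smul' := fun a v => by
        rw [RingHom.id_apply, ← Integrable.toL1_smul]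
        simp only [Pi.smul_apply, smul_eq_mul, mul_assoc, Finset.mul_sum] }
  have hker : LinearMap.ker L = ⊥ := LinearMap.ker_eq_bot'.2 fun v hv =>
    hli v <| (hint v).coeFn_toL1.symm.trans <| by
      rw [show (hint v).toL1 _ = 0 from hv]
      exact Lp.coeFn_zero _ _ _
  obtain ⟨K, -, hK⟩ := L.exists_antilipschitzWith hker
  refine ⟨K, K.2, fun v => ?_⟩
  have hnorm := hK.le_mul_dist v 0
  rwa [map_zero, dist_zero_right, dist_zero_right,
    show ‖L v‖ = _ from L1.norm_of_fun_eq_integral_norm (hint v)] at hnorm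

theorem contDiffOn_of_linearMap_comp {E M : Type*} [NormedAddCommGroup E] [NormedSpace ℝ E]
    [AddCommGroup M] [Module ℝ M] [FiniteDimensional ℝ M] {n : WithTop ℕ∞} {Ω : Set E}
    {κ : Type*} {e : κ → M →ₗ[ℝ] ℝ} (he : ∀ v, (∀ i, e i v = 0) → v = 0) {c : E → M}
    (hc : ∀ i, ContDiffOn ℝ n (fun x => e i (c x)) Ω) (L : M →ₗ[ℝ] ℝ) :
    ContDiffOn ℝ n (fun x => L (c x)) Ω := by
  have hL : L ∈ Submodule.span ℝ (Set.range e) :=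
    FiniteDimensional.mem_span_of_iInf_ker_le_ker fun v hv => by
      rw [he v fun i => (Submodule.mem_iInf _).1 hv i]
      exact zero_mem _
  induction hL using Submodule.span_induction with
  | mem L hL =>
    obtain ⟨i, rfl⟩ := hL
    exact hc i
  | zero => exact contDiffOn_const
  | add L L' _ _ hL hL' => exact hL.add hL'
  | smul a L _ hL => exact hL.const_smul a

end FiniteDimensional

section HomogeneousPolynomials

open MvPolynomial (eval C X bind₁ bind₁_monomial)

theorem coeff_bind₁_C_mul_X {σ R : Type*} [CommSemiring R] (t : R) (P : MvPolynomial σ R)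
    (d : σ →₀ ℕ) : (bind₁ (fun i => C t * X i) P).coeff d = t ^ d.degree * P.coeff d := by
  classical
  induction P using MvPolynomial.induction_on' with
  | monomial e a =>
    have hmon : bind₁ (fun i => C t * X i : σ → MvPolynomial σ R) (MvPolynomial.monomial e a)
        = MvPolynomial.monomial e (t ^ e.degree * a) := by
      rw [bind₁_monomial, MvPolynomial.monomial_eq]
      simp only [mul_pow, Finset.prod_mul_distrib, Finset.prod_pow_eq_pow_sum, Finsupp.prod,
        Finsupp.degree_apply, map_mul, map_pow]
      rw [mul_left_comm, mul_assoc]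
    rw [hmon, MvPolynomial.coeff_monomial, MvPolynomial.coeff_monomial]
    split_ifs with h
    · rw [h]
    · rw [mul_zero]
  | add P Q hP hQ => rw [map_add, MvPolynomial.coeff_add, MvPolynomial.coeff_add, hP, hQ, mul_add]

theorem isHomogeneous_of_eval_smul {σ : Type*} {k : ℕ} {P : MvPolynomial σ ℝ}
    (h : ∀ (t : ℝ) (x : σ → ℝ), eval (t • x) P = t ^ k * eval x P) : P.IsHomogeneous k := by
  have hdil : bind₁ (fun i => C 2 * X i : σ → MvPolynomial σ ℝ) P = C (2 ^ k) * P := by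
    refine MvPolynomial.funext fun x => ?_
    rw [map_mul, MvPolynomial.eval_C, ← h, MvPolynomial.eval, MvPolynomial.eval₂Hom_bind₁]
    simp only [map_mul, MvPolynomial.eval₂Hom_C, MvPolynomial.eval₂Hom_X', RingHom.id_apply,
      Pi.smul_def, smul_eq_mul]
    rfl
  intro d hd
  have hcoeff := coeff_bind₁_C_mul_X 2 P d
  rw [hdil, MvPolynomial.coeff_C_mul] at hcoeff
  have hdeg : k = d.degree :=
    pow_right_injective₀ two_pos (by norm_num) (mul_right_cancel₀ hd hcoeff)
  rw [hdeg, Finsupp.degree_eq_weight_one]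
  rfl

theorem exists_homogeneous_basis (R σ : Type*) [Field R] [Finite σ] (k : ℕ) :
    ∃ (n : ℕ) (q : Fin n → MvPolynomial σ R), LinearIndependent R q ∧
      (∀ s, (q s).IsHomogeneous k) ∧
      ∀ P : MvPolynomial σ R, P.IsHomogeneous k → ∃ v : Fin n → R, P = ∑ s, v s • q s := by
  have := Module.Finite.iff_fg.2 (MvPolynomial.homogeneousSubmodule_fg σ R k)
  let b := Module.finBasis R (MvPolynomial.homogeneousSubmodule σ R k)
  refine ⟨_, fun s => b s, b.linearIndependent.map' (Submodule.subtype _) (Submodule.ker_subtype _),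
    fun s => (b s).2, fun P hP => ⟨b.repr ⟨P, hP⟩, ?_⟩⟩
  simpa only [AddSubmonoidClass.coe_finsetSum, SetLike.val_smul] using
    (congrArg Subtype.val (b.sum_repr ⟨P, hP⟩)).symm

theorem linearIndependent_eval_ball {m : ℕ} {ι : Type*} [Fintype ι] {q : ι → MvPolynomial (Fin m) ℝ}
    (hq : LinearIndependent ℝ q) {r : ℝ} (hr : 0 < r) {v : ι → ℝ}
    (hv : ∀ u ∈ ball (0 : Evec m) r, ∑ s, v s * eval u.ofLp (q s) = 0) : v = 0 :=
  funext <| Fintype.linearIndependent_iff.1 hq v <|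
    mvPolynomial_eq_zero_of_eval_ball hr fun u hu => by
      simpa only [map_sum, MvPolynomial.smul_eval] using hv u hu

theorem exists_norm_le_integral_abs_eval {m : ℕ} {ι : Type*} [Fintype ι]
    {q : ι → MvPolynomial (Fin m) ℝ} (hq : LinearIndependent ℝ q) {r : ℝ} (hr : 0 < r) :
    ∃ C : ℝ, 0 ≤ C ∧ ∀ v : ι → ℝ,
      ‖v‖ ≤ C * ∫ u in ball (0 : Evec m) r, |∑ s, v s * eval u.ofLp (q s)| := by
  refine exists_norm_le_integral_abs_sum (fun s => ?_) fun v hv => ?_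
  · exact ((contDiff_eval (n := 0) (q s)).continuous.continuousOn.integrableOn_compact
      (isCompact_closedBall 0 r)).mono_set ball_subset_closedBall
  · refine linearIndependent_eval_ball hq hr
      (Measure.eqOn_open_of_ae_eq hv isOpen_ball (Continuous.continuousOn ?_) continuousOn_const)
    exact continuous_finsetSum _ fun s _ =>
      continuous_const.mul (contDiff_eval (n := 0) (q s)).continuous

end HomogeneousPolynomials

section SeparatedSumEstimates

open scoped Convolution
open MvPolynomial (eval pderiv)

variable {m n : ℕ} {ι : Type*} [Fintype ι] {W : Set (Evec m)} {f : Evec m → Evec m → ℝ}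
  {c : ι → Evec m → ℝ} {q : ι → MvPolynomial (Fin m) ℝ}

theorem IsSeparatedSum.contDiffOn_coeff (h : IsSeparatedSum W f c q) (hq : LinearIndependent ℝ q)
    {l : WithTop ℕ∞} (hf : ∀ u ∈ ball (0 : Evec m) 1, ContDiffOn ℝ l (fun x => f x u) W) (s : ι) :
    ContDiffOn ℝ l (c s) W := by
  refine contDiffOn_of_linearMap_comp (c := fun x s => c s x)
    (e := fun u : ball (0 : Evec m) 1 => Fintype.linearCombination ℝ fun s => eval u.1.ofLp (q s))
    (fun v hv => ?_) (fun u => ?_) (LinearMap.proj s)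
  · refine linearIndependent_eval_ball hq one_pos fun u hu => ?_
    simpa only [Fintype.linearCombination_apply, smul_eq_mul] using hv ⟨u, hu⟩
  · refine (hf u u.2).congr fun x hx => ?_
    simp only [Fintype.linearCombination_apply, smul_eq_mul, h x hx u u.2]

theorem IsSeparatedSum.exists_contDiff_coeff (h : IsSeparatedSum W f c q)
    (hq : LinearIndependent ℝ q) (hW : IsOpen W) {l : ℕ∞}
    (hf : ∀ u ∈ ball (0 : Evec m) 1, ContDiffOn ℝ l (fun x => f x u) W) {K : Set (Evec m)}
    (hK : IsClosed K) (hKW : K ⊆ W) :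
    ∃ d : ι → Evec m → ℝ, (∀ s, ContDiff ℝ l (d s)) ∧ IsSeparatedSum K f d q := by
  choose d hd hdc using fun s =>
    exists_contDiff_eqOn (h.contDiffOn_coeff hq hf s) hW hK hKW
  refine ⟨d, hd, fun x hx u hu => ?_⟩
  rw [h x (hKW hx) u hu]
  exact Finset.sum_congr rfl fun s _ => by rw [hdc s hx]

theorem exists_abs_eval_le (p : MvPolynomial (Fin m) ℝ) :
    ∃ M : ℝ, 0 ≤ M ∧ ∀ u ∈ ball (0 : Evec m) 1, |eval u.ofLp p| ≤ M := by
  obtain ⟨M, hM⟩ := (isCompact_closedBall (0 : Evec m) 1).exists_bound_of_continuousOn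
    (contDiff_eval (n := 0) p).continuous.continuousOn
  exact ⟨M, (norm_nonneg _).trans (hM 0 (mem_closedBall_self zero_le_one)),
    fun u hu => hM u (ball_subset_closedBall hu)⟩

theorem IsSeparatedSum.convolution_mollifier (h : IsSeparatedSum W f c q) {φ : Evec m → ℝ}
    (hφ : IsPolyharmonicKernel n φ) (hc : ∀ s, ContDiff ℝ 1 (c s))
    (hcW : ∀ s, IsWeaklyPolyharmonicOn n (c s) W) {R : ℝ} (hR : 0 < R) {V : Set (Evec m)}
    (hV : ∀ b ∈ V, closedBall b R ⊆ W) :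
    IsSeparatedSum V f (fun s => c s ⋆[ContinuousLinearMap.mul ℝ ℝ] mollifier φ R) q := by
  intro b hb u hu
  rw [h b (hV b hb (mem_closedBall_self hR.le)) u hu]
  exact Finset.sum_congr rfl fun s _ => by
    rw [(hcW s).eq_convolution_mollifier hφ (hc s) hR (hV b hb)]

theorem IsSeparatedSum.Dv_Dx_eq (h : IsSeparatedSum W f c q) {φ : Evec m → ℝ}
    (hφ : IsPolyharmonicKernel n φ) (hc : ∀ s, ContDiff ℝ 1 (c s))
    (hcW : ∀ s, IsWeaklyPolyharmonicOn n (c s) W) {a : Evec m} {R : ℝ} (hR : 0 < R)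
    (ha : ball a (R + R) ⊆ W) (α β : Fin m → ℕ) {ν : Evec m} (hν : ν ∈ ball 0 1) :
    _root_.Dv β (_root_.Dx α f) a ν =
      ∑ s, multiIterate pdv α (c s ⋆[ContinuousLinearMap.mul ℝ ℝ] mollifier φ R) a *
        eval ν.ofLp (multiIterate (fun j => pderiv j) β (q s)) := by
  have hball : ∀ b ∈ ball a R, closedBall b R ⊆ W := fun b hb x hx => ha <| by
    rw [mem_ball] at hb ⊢
    linarith [dist_triangle x b a, mem_closedBall.1 hx]
  have hsmooth (s : ι) : ContDiff ℝ ∞ (c s ⋆[ContinuousLinearMap.mul ℝ ℝ] mollifier φ R) :=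
    (hasCompactSupport_mollifier hφ.tsupport_subset hR).contDiff_convolution_right _
      (hc s).continuous.locallyIntegrable (contDiff_mollifier hφ.contDiff R)
  exact ((h.convolution_mollifier hφ hc hcW hR hball).Dx isOpen_ball hsmooth α).Dv β a
    (mem_ball_self hR) ν hν

theorem exists_abs_Dv_Dx_le_sum_setIntegral_coeff (n : ℕ) (q : ι → MvPolynomial (Fin m) ℝ)
    (α β : Fin m → ℕ) :
    ∃ C : ℝ, 0 ≤ C ∧ ∀ (W : Set (Evec m)) (f : Evec m → Evec m → ℝ) (c : ι → Evec m → ℝ),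
      IsSeparatedSum W f c q → (∀ s, ContDiff ℝ 1 (c s)) →
        (∀ s, IsWeaklyPolyharmonicOn (n + 1) (c s) W) →
          ∀ (a : Evec m) (R : ℝ), 0 < R → ball a (R + R) ⊆ W → ∀ ν ∈ ball (0 : Evec m) 1,
            |Dv β (Dx α f) a ν|
              ≤ C * R⁻¹ ^ (m + ∑ i, α i) * ∑ s, ∫ x in closedBall a R, |c s x| := by
  obtain ⟨φ, hφ⟩ := exists_isPolyharmonicKernel m n
  obtain ⟨C, hC0, hC⟩ :=
    exists_abs_multiIterate_pdv_convolution_mollifier_le hφ.contDiff hφ.tsupport_subset α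
  choose M hM0 hM using fun s => exists_abs_eval_le (multiIterate (fun j => pderiv j) β (q s))
  refine ⟨C * ∑ s, M s, mul_nonneg hC0 (Finset.sum_nonneg fun s _ => hM0 s),
    fun W f c h hc hcW a R hR ha ν hν => ?_⟩
  rw [h.Dv_Dx_eq hφ hc hcW hR ha α β hν, Finset.mul_sum]
  refine (Finset.abs_sum_le_sum_abs _ _).trans (Finset.sum_le_sum fun s _ => ?_)
  have hMs : M s ≤ ∑ s, M s := Finset.single_le_sum (fun s _ => hM0 s) (Finset.mem_univ s)
  calc _ ≤ (C * R⁻¹ ^ (m + ∑ i, α i) * ∫ x in closedBall a R, |c s x|) * ∑ s, M s := by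
        rw [abs_mul]
        gcongr
        · exact hC (c s) (hc s).continuous a R hR
        · exact (hM s ν hν).trans hMs
    _ = _ := by ring

theorem integrableOn_setIntegral_ball {G : Evec m → Evec m → ℝ}
    (hG : Continuous fun p : Evec m × Evec m => G p.1 p.2) (a b : Evec m) (r t : ℝ) :
    IntegrableOn (fun x => ∫ u in ball b t, G x u) (ball a r) := by
  refine Integrable.integral_prod_left (f := fun p : Evec m × Evec m => G p.1 p.2) ?_
  rw [Measure.prod_restrict, ← Measure.volume_eq_prod]
  exact (hG.continuousOn.integrableOn_compact
    ((isCompact_closedBall a r).prod (isCompact_closedBall b t))).mono_set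
    (Set.prod_mono ball_subset_closedBall ball_subset_closedBall)

theorem integrableOn_ball_of_continuous {g : Evec m → ℝ} (hg : Continuous g) (a : Evec m) (r : ℝ) :
    IntegrableOn g (ball a r) :=
  (hg.continuousOn.integrableOn_compact (isCompact_closedBall a r)).mono_set ball_subset_closedBall

theorem exists_setIntegral_abs_coeff_le (hq : LinearIndependent ℝ q) {ρ₀ : ℝ} (hρ₀ : 0 < ρ₀) :
    ∃ C : ℝ, 0 ≤ C ∧ ∀ (f : Evec m → Evec m → ℝ) (c : ι → Evec m → ℝ) (a : Evec m) (r R ρ : ℝ),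
      (∀ s, Continuous (c s)) → IsSeparatedSum (ball a r) f c q → R < r → ρ₀ ≤ ρ → ρ ≤ 1 →
        ∀ s, ∫ x in closedBall a R, |c s x|
          ≤ C * ∫ x in ball a r, ∫ u in ball (0 : Evec m) ρ, |f x u| := by
  obtain ⟨C, hC0, hC⟩ := exists_norm_le_integral_abs_eval hq hρ₀
  refine ⟨C, hC0, fun f c a r R ρ hc h hR hρ hρ1 s => ?_⟩
  set G : Evec m → Evec m → ℝ := fun x u => |∑ s, c s x * eval u.ofLp (q s)|
  have hG : Continuous fun p : Evec m × Evec m => G p.1 p.2 :=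
    (continuous_finsetSum _ fun s _ => ((hc s).comp continuous_fst).mul
      ((contDiff_eval (n := 0) (q s)).continuous.comp continuous_snd)).abs
  have hfG : ∫ x in ball a r, ∫ u in ball (0 : Evec m) ρ, |f x u|
      = ∫ x in ball a r, ∫ u in ball (0 : Evec m) ρ, G x u :=
    setIntegral_congr_fun measurableSet_ball fun x hx =>
      setIntegral_congr_fun measurableSet_ball fun u hu =>
        congrArg _ (h x hx u (ball_subset_ball hρ1 hu))
  have hcs := integrableOn_ball_of_continuous (hc s).abs a r
  have hpointwise (x : Evec m) : |c s x| ≤ C * ∫ u in ball (0 : Evec m) ρ, G x u := by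
    refine (norm_le_pi_norm (fun s => c s x) s).trans ((hC _).trans ?_)
    have hGx : Continuous (G x) := hG.comp (Continuous.prodMk_right x)
    exact mul_le_mul_of_nonneg_left (setIntegral_mono_set (integrableOn_ball_of_continuous hGx 0 ρ)
      (Eventually.of_forall fun u => abs_nonneg _) (ball_subset_ball hρ).eventuallyLE) hC0
  calc ∫ x in closedBall a R, |c s x| ≤ ∫ x in ball a r, |c s x| :=
        setIntegral_mono_set hcs (Eventually.of_forall fun x => abs_nonneg _)
          (closedBall_subset_ball hR).eventuallyLE
    _ ≤ ∫ x in ball a r, C * ∫ u in ball (0 : Evec m) ρ, G x u :=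
        integral_mono hcs ((integrableOn_setIntegral_ball hG a 0 r ρ).const_mul C) hpointwise
    _ = _ := by rw [integral_const_mul, hfG]

end SeparatedSumEstimates

section BosonicLaplacian

open MvPolynomial (eval)

theorem IsHk.exists_isHomogeneous {m k : ℕ} {p : Evec m → ℝ} (hp : IsHk m k p) :
    ∃ P : MvPolynomial (Fin m) ℝ, P.IsHomogeneous k ∧ ∀ u : Evec m, p u = eval u.ofLp P := by
  obtain ⟨⟨P, hP⟩, hhom, -⟩ := hp
  refine ⟨P, isHomogeneous_of_eval_smul fun t x => ?_, hP⟩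
  have hx := hhom t (WithLp.toLp 2 x)
  rwa [hP, hP] at hx

theorem C2Hk.exists_isHomogeneous {m k : ℕ} {Ω : Set (Evec m)} {f : Evec m → Evec m → ℝ}
    (hf : C2Hk m k Ω f) {x : Evec m} (hx : x ∈ Ω) :
    ∃ P : MvPolynomial (Fin m) ℝ, P.IsHomogeneous k ∧
      ∀ u ∈ ball (0 : Evec m) 1, f x u = eval u.ofLp P := by
  obtain ⟨p, hp, hfp⟩ := hf.2 x hx
  obtain ⟨P, hP, hpP⟩ := hp.exists_isHomogeneous
  exact ⟨P, hP, fun u hu => (hfp u (ball_subset_closedBall hu)).trans (hpP u)⟩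

theorem C2Hk.contDiffOn {m k : ℕ} {Ω : Set (Evec m)} {f : Evec m → Evec m → ℝ}
    (hf : C2Hk m k Ω f) (u : Evec m) (hu : u ∈ ball 0 1) : ContDiffOn ℝ 2 (fun x => f x u) Ω :=
  hf.1.comp (f := fun x => (x, u)) (by fun_prop) fun _x hx => ⟨hx, hu⟩

theorem exists_isSeparatedSum {m k : ℕ} {ι : Type*} [Fintype ι] {q : ι → MvPolynomial (Fin m) ℝ}
    (hspan : ∀ P : MvPolynomial (Fin m) ℝ, P.IsHomogeneous k → ∃ v : ι → ℝ, P = ∑ s, v s • q s)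
    {Ω : Set (Evec m)} {f : Evec m → Evec m → ℝ}
    (hf : ∀ x ∈ Ω, ∃ P : MvPolynomial (Fin m) ℝ, P.IsHomogeneous k ∧
      ∀ u ∈ ball (0 : Evec m) 1, f x u = eval u.ofLp P) :
    ∃ c : ι → Evec m → ℝ, IsSeparatedSum Ω f c q := by
  have hcoeff (x : Evec m) : ∃ v : ι → ℝ, x ∈ Ω →
      ∀ u ∈ ball (0 : Evec m) 1, f x u = ∑ s, v s * eval u.ofLp (q s) := by
    by_cases hx : x ∈ Ω
    · obtain ⟨P, hP, hfP⟩ := hf x hx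
      obtain ⟨v, rfl⟩ := hspan P hP
      exact ⟨v, fun _ u hu => by simpa only [map_sum, MvPolynomial.smul_eval] using hfP u hu⟩
    · exact ⟨0, fun h => absurd h hx⟩
  choose v hv using hcoeff
  exact ⟨fun s x => v x s, hv⟩

end BosonicLaplacian

theorem stmt_16_general (m k : ℕ) (hm : ∀ j : ℕ, m + 2 * j ≠ 4) (α β : Fin m → ℕ) {ρ₀ : ℝ}
    (hρ₀ : 0 < ρ₀) :
    ∃ c : ℝ, 0 < c ∧
      ∀ Ω : Set (Evec m), IsOpen Ω →
        ∀ f : Evec m → Evec m → ℝ,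
          (∀ u ∈ ball (0 : Evec m) 1, ContDiffOn ℝ 2 (fun x => f x u) Ω) →
          (∀ x ∈ Ω, ∃ P : MvPolynomial (Fin m) ℝ, P.IsHomogeneous k ∧
            ∀ u ∈ ball (0 : Evec m) 1, f x u = MvPolynomial.eval u.ofLp P) →
          (∀ x ∈ Ω, ∀ u ∈ ball (0 : Evec m) 1, Dk m k f x u = 0) →
          ∀ (a : Evec m) (r : ℝ), 0 < r → closedBall a r ⊆ Ω →
            ∀ ν : Evec m, ‖ν‖ < 1 → ∀ ρ : ℝ, ρ₀ ≤ ρ → ρ ≤ 1 →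
              |Dv β (Dx α f) a ν| ≤
                c * (∫ x in ball a r, ∫ u in ball (0 : Evec m) ρ, |f x u|) /
                  r ^ (m + ∑ i, α i) := by
  obtain ⟨d, q, hq, hqk, hspan⟩ := exists_homogeneous_basis ℝ (Fin m) k
  obtain ⟨C₁, hC₁, hderiv⟩ := exists_abs_Dv_Dx_le_sum_setIntegral_coeff k q α β
  obtain ⟨C₂, hC₂, hcoeff⟩ := exists_setIntegral_abs_coeff_le hq hρ₀
  refine ⟨1 + C₁ * 2 ^ (m + ∑ i, α i) * (d * C₂), by positivity,
    fun Ω hΩ f hf hfP hD a r hr ha ν hν ρ hρ hρ1 => ?_⟩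
  obtain ⟨c₀, hc₀⟩ := exists_isSeparatedSum hspan hfP
  obtain ⟨c, hc, hsep⟩ := hc₀.exists_contDiff_coeff hq hΩ hf isClosed_closedBall ha
  replace hsep : IsSeparatedSum (ball a r) f c q := fun x hx => hsep x (ball_subset_closedBall hx)
  have hweak := hsep.isWeaklyPolyharmonicOn isOpen_ball hc hqk hq hm
    fun x hx => hD x (ha (ball_subset_closedBall hx))
  have hest := hderiv _ f c hsep (fun s => (hc s).of_le one_le_two) hweak a (r / 2) (half_pos hr)
    (by rw [add_halves]) ν (mem_ball_zero_iff.2 hν)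
  have hcs := hcoeff f c a r (r / 2) ρ (fun s => (hc s).continuous) hsep (half_lt_self hr) hρ hρ1
  set J := ∫ x in ball a r, ∫ u in ball (0 : Evec m) ρ, |f x u|
  have : 0 ≤ J := integral_nonneg fun x => integral_nonneg fun u => abs_nonneg _
  calc |Dv β (Dx α f) a ν|
      ≤ C₁ * (r / 2)⁻¹ ^ (m + ∑ i, α i) * ∑ _s : Fin d, C₂ * J :=
        hest.trans (by gcongr with s; exact hcs s)
    _ = C₁ * 2 ^ (m + ∑ i, α i) * (d * C₂) * J / r ^ (m + ∑ i, α i) := by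
        rw [Finset.sum_const, Finset.card_univ, Fintype.card_fin, nsmul_eq_mul, inv_div, div_pow]
        ring
    _ ≤ _ := by gcongr; exact le_add_of_nonneg_left zero_le_one

/-- Cauchy's estimates with the `L¹` norm, `m > 4`, with a constant
depending only on `α`, `β`, `m`, `k`; here `r₂ = 1 - ‖ν₀‖`. -/
theorem stmt_16 (m k : ℕ) (hm : 4 < m) (hk : 1 ≤ k) (α β : Fin m → ℕ) :
    ∃ c : ℝ, 0 < c ∧
      ∀ Ω : Set (Evec m), IsOpen Ω →
        ∀ f : Evec m → Evec m → ℝ, C2Hk m k Ω f →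
          (∀ x ∈ Ω, ∀ u ∈ ball (0 : Evec m) 1, Dk m k f x u = 0) →
          ∀ (a : Evec m) (r₁ : ℝ), 0 < r₁ → closedBall a r₁ ⊆ Ω →
            ∀ ν₀ : Evec m, ‖ν₀‖ < 1 →
              |Dv β (Dx α f) a ν₀| ≤
                c * (∫ x in ball a r₁,
                      ∫ ν in ball (0 : Evec m) (1 - (1 - ‖ν₀‖) / 4), |f x ν|) /
                  (r₁ ^ (m + ∑ i, α i) * (1 - ‖ν₀‖) ^ (m + ∑ i, β i)) := by
  obtain ⟨c, hc, hest⟩ := stmt_16_general m k (by omega) α β (ρ₀ := 3 / 4) (by norm_num)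
  refine ⟨c, hc, fun Ω hΩ f hf hD a r₁ hr₁ ha ν₀ hν => ?_⟩
  have hν0 := norm_nonneg ν₀
  have hest' := hest Ω hΩ f hf.contDiffOn (fun x hx => hf.exists_isHomogeneous hx) hD a r₁ hr₁ ha
    ν₀ hν (1 - (1 - ‖ν₀‖) / 4) (by linarith) (by linarith)
  have hr₂ : (1 - ‖ν₀‖) ^ (m + ∑ i, β i) ≤ 1 := pow_le_one₀ (by linarith) (by linarith)
  have hr₂_pos : 0 < (1 - ‖ν₀‖) ^ (m + ∑ i, β i) := pow_pos (by linarith) _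
  have hnorm : 0 ≤ ∫ x in ball a r₁, ∫ u in ball (0 : Evec m) (1 - (1 - ‖ν₀‖) / 4), |f x u| :=
    integral_nonneg fun x => integral_nonneg fun u => abs_nonneg _
  exact hest'.trans (div_le_div_of_nonneg_left (mul_nonneg hc.le hnorm)
    (mul_pos (pow_pos hr₁ _) hr₂_pos) (mul_le_of_le_one_right (by positivity) hr₂))
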